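/- arXiv:2603.15830 — 3 statements merged into one kernel-verified Lean document; each statement's English description precedes it below -/
import Mathlib

section
/- For any n ≥ 1 and 1 ≤ k ≤ n, the number of n-element subsets of no interest aside: the number of (k−1)-element subsets of {1,…,n−1} whose elements sum to 1 modulo n equals the number of cyclic V-shaped permutations of {1,…,n} whose minimum is in position k. -/
open Finset

/-- Number of ones in a cyclic binary word of length `n`. -/
noncomputable def onesCount (n : ℕ) (w : ZMod n → Bool) : ℕ :=
  Nat.card {i : ZMod n // w i = true}

/-- The co-period of a cyclic binary word `w` of length `n`: the size of its
stabilizer under cyclic rotation (equivalently, the `j` such that `w = v^j`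
with `v` primitive). -/
noncomputable def coPeriod (n : ℕ) (w : ZMod n → Bool) : ℕ :=
  Nat.card {t : ZMod n // ∀ i, w (i + t) = w i}

/-- Two cyclic words are related iff they are cyclic rotations of each other. -/
def rotRel (n : ℕ) (u v : ZMod n → Bool) : Prop :=
  ∃ t : ZMod n, ∀ i, u i = v (i + t)

theorem rotRel_equivalence (n : ℕ) : Equivalence (rotRel n) := by
  constructor
  · exact fun u => ⟨0, fun i => by rw [add_zero]⟩
  · rintro u v ⟨t, h⟩
    exact ⟨-t, fun i => by rw [h, neg_add_cancel_right]⟩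
  · rintro u v w ⟨t1, h1⟩ ⟨t2, h2⟩
    exact ⟨t1 + t2, fun i => by rw [h1, h2, ← add_assoc]⟩

def rotSetoid (n : ℕ) : Setoid (ZMod n → Bool) := ⟨rotRel n, rotRel_equivalence n⟩

/-- The number of binary necklaces of length `n` with `k` ones. -/
noncomputable def NCard (n k : ℕ) : ℕ :=
  Nat.card (Quotient (Setoid.comap
    (Subtype.val : {w : ZMod n → Bool // onesCount n w = k} → _) (rotSetoid n)))

/-- The number of binary necklaces of length `n` with `k` ones whose co-period divides `r`. -/
noncomputable def NrCard (n k r : ℕ) : ℕ :=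
  Nat.card (Quotient (Setoid.comap
    (Subtype.val : {w : ZMod n → Bool // onesCount n w = k ∧ coPeriod n w ∣ r} → _)
    (rotSetoid n)))

/-- The number of `k`-element subsets of `{1,…,n}` whose elements sum to `r` mod `n`. -/
def SbarCard (n k r : ℕ) : ℕ :=
  ((Finset.Icc 1 n).powerset.filter
    (fun A => A.card = k ∧ (∑ a ∈ A, a) % n = r)).card

/-- The number of `k`-element subsets of `{1,…,n-1}` whose elements sum to `r` mod `n`. -/
def SCard (n k r : ℕ) : ℕ :=
  ((Finset.Icc 1 (n - 1)).powerset.filter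
    (fun A => A.card = k ∧ (∑ a ∈ A, a) % n = r)).card

/-- The Ramanujan sum `c_d(r) = ∑_{j ∣ gcd(r,d)} j · μ(d/j)`. -/
def ramanujanSum (d : ℕ) (r : ℤ) : ℤ :=
  ∑ j ∈ (Int.gcd r d).divisors, (j : ℤ) * ArithmeticFunction.moebius (d / j)

/-- `σ` (in one-line notation `σ 0, σ 1, …, σ (n-1)`, i.e. position `i+1` holds
`σ i`) is V-shaped with its minimum in position `k` (1-based). -/
def IsVShapedAt (n k : ℕ) (σ : Equiv.Perm (Fin n)) : Prop :=
  (∀ i j : Fin n, i < j → (j : ℕ) + 1 ≤ k → σ j < σ i) ∧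
  (∀ i j : Fin n, i < j → k ≤ (i : ℕ) + 1 → σ i < σ j)

/-- `σ` consists of a single cycle. -/
def IsCyclicPerm (n : ℕ) (σ : Equiv.Perm (Fin n)) : Prop :=
  ∀ x y : Fin n, σ.SameCycle x y


namespace CV
open Polynomial

/-- translation stabilizer -/
def stab {n : ℕ} [NeZero n] (A : Finset (ZMod n)) : Finset (ZMod n) :=
  univ.filter (fun t => ∀ i, i + t ∈ A ↔ i ∈ A)

theorem mem_stab {n : ℕ} [NeZero n] {A : Finset (ZMod n)} {t : ZMod n} :
    t ∈ stab A ↔ ∀ i, i + t ∈ A ↔ i ∈ A := by simp [stab]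

theorem prod_zmod {n : ℕ} [NeZero n] {M : Type*} [CommMonoid M] (f : ℕ → M) :
    ∏ a : ZMod n, f a.val = ∏ i ∈ range n, f i := by
  refine Finset.prod_nbij ZMod.val ?_ ?_ ?_ ?_
  · intro a _; exact mem_range.2 (ZMod.val_lt a)
  · intro a _ b _ h; exact ZMod.val_injective n h
  · intro i hi
    have : i < n := by simpa using hi
    exact ⟨(i : ZMod n), by simp, ZMod.val_cast_of_lt this⟩
  · intros; rfl

theorem prod_periodic {M : Type*} [CommMonoid M] (f : ℕ → M) (d : ℕ)
    (hf : ∀ i, f (d + i) = f i) (m : ℕ) :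
    ∏ i ∈ range (d * m), f i = (∏ i ∈ range d, f i) ^ m := by
  induction m with
  | zero => simp
  | succ m ih =>
    rw [Nat.mul_succ, Nat.add_comm, prod_range_add, pow_succ, mul_comm, ← ih]
    simp only [hf]

theorem prod_root {η : ℂ} {d : ℕ} (hd : 0 < d) (hη : IsPrimitiveRoot η d) :
    ∏ i ∈ range d, (1 + C (η ^ i) * X : ℂ[X]) = 1 - (-X) ^ d := by
  have h1 : IsPrimitiveRoot (C η : ℂ[X]) d := hη.map_of_injective C_injective
  have h2 := X_pow_sub_C_eq_prod h1 (α := -X) hd rfl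
  have h3 := congrArg (Polynomial.eval 1) h2
  rw [Polynomial.eval_prod] at h3
  simp only [eval_sub, eval_pow, eval_X, eval_C, one_pow] at h3
  rw [h3]
  refine prod_congr rfl fun i _ => ?_
  simp

theorem prim_root {n : ℕ} [NeZero n] (t : ZMod n) :
    IsPrimitiveRoot (ZMod.stdAddChar t) (addOrderOf t) := by
  constructor
  · rw [← AddChar.map_nsmul_eq_pow, addOrderOf_nsmul_eq_zero, AddChar.map_zero_eq_one]
  · intro l hl
    rw [← AddChar.map_nsmul_eq_pow] at hl
    apply addOrderOf_dvd_of_nsmul_eq_zero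
    apply ZMod.injective_stdAddChar
    rw [hl, AddChar.map_zero_eq_one]

theorem addOrderOf_dvd_n {n : ℕ} [NeZero n] (t : ZMod n) : addOrderOf t ∣ n := by
  apply addOrderOf_dvd_of_nsmul_eq_zero; simp

theorem poly_lhs {n : ℕ} [NeZero n] (t : ZMod n) :
    ∏ a : ZMod n, (1 + C (ZMod.stdAddChar (t * a)) * X : ℂ[X])
      = (1 - (-X) ^ addOrderOf t) ^ (n / addOrderOf t) := by
  have hd : 0 < addOrderOf t := addOrderOf_pos t
  rw [← prod_root hd (prim_root t), ← prod_periodic, Nat.mul_div_cancel' (addOrderOf_dvd_n t),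
    ← prod_zmod]
  · refine prod_congr rfl fun a _ => ?_
    have : t * a = a.val • t := by
      rw [nsmul_eq_mul, ZMod.natCast_val, ZMod.cast_id', id, mul_comm]
    rw [this, AddChar.map_nsmul_eq_pow]
  · intro i
    rw [pow_add, (prim_root t).pow_eq_one, one_mul]

theorem card_quot {n : ℕ} [NeZero n] (t : ZMod n) :
    Nat.card (ZMod n ⧸ AddSubgroup.zmultiples t) = n / addOrderOf t := by
  have h := AddSubgroup.card_eq_card_quotient_mul_card_addSubgroup (AddSubgroup.zmultiples t)
  rw [Nat.card_zmultiples, Nat.card_zmod] at h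
  exact (Nat.div_eq_of_eq_mul_left (addOrderOf_pos t) h).symm

theorem sum_pow_card {Q R : Type*} [Fintype Q] [CommRing R] (x : R) :
    ∑ B : Finset Q, x ^ B.card = (1 + x) ^ Fintype.card Q := by
  rw [← Finset.card_univ, ← Finset.prod_const, Finset.prod_one_add, Finset.powerset_univ]
  simp only [Finset.prod_const]

theorem addChar_sum {n : ℕ} [NeZero n] {ι : Type*} (s : Finset ι) (f : ι → ZMod n) :
    (ZMod.stdAddChar (∑ i ∈ s, f i) : ℂ) = ∏ i ∈ s, ZMod.stdAddChar (f i) := by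
  classical
  induction s using Finset.induction_on with
  | empty => simp
  | insert a s ha ih => rw [sum_insert ha, prod_insert ha, AddChar.map_add_eq_mul, ih]

open Classical in
theorem poly_rhs {n : ℕ} [NeZero n] (t : ZMod n) :
    ∑ A : Finset (ZMod n) with t ∈ stab A,
      ((-1) ^ (A.card + A.card / addOrderOf t) * X ^ A.card : ℂ[X])
      = (1 - (-X) ^ addOrderOf t) ^ (n / addOrderOf t) := by
  set Q := ZMod n ⧸ AddSubgroup.zmultiples t with hQ
  have : Fintype Q := Fintype.ofFinite _
  have hd : 0 < addOrderOf t := addOrderOf_pos t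
  have h1 : (1 - (-X) ^ addOrderOf t : ℂ[X]) ^ (n / addOrderOf t)
      = ∑ B : Finset Q, (-(-X) ^ addOrderOf t) ^ B.card := by
    rw [sum_pow_card, ← card_quot, ← Nat.card_eq_fintype_card, sub_eq_add_neg]
  rw [h1]
  symm
  let mk : ZMod n → Q := fun a => QuotientAddGroup.mk a
  have hmk : ∀ a, mk (a + t) = mk a := by
    intro a
    apply QuotientAddGroup.eq.2
    simp
  have hcard : ∀ B : Finset Q, (univ.filter (fun a => mk a ∈ B)).card = addOrderOf t * B.card := by
    intro B
    have e := QuotientAddGroup.preimageMkEquivAddSubgroupProdSet (AddSubgroup.zmultiples t) (B : Set Q)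
    have := Nat.card_congr e
    rw [Nat.card_prod, Nat.card_zmultiples] at this
    simp only [Nat.card_eq_fintype_card, Fintype.card_coe, SetLike.coe_sort_coe] at this
    rw [← this]
    rw [Fintype.card_of_subtype]
    simp [mk]
  refine Finset.sum_bij (fun B _ => univ.filter (fun a => mk a ∈ B)) ?_ ?_ ?_ ?_
  · intro B _
    simp [mem_stab, hmk]
  · intro B _ B' _ h
    ext q
    obtain ⟨a, rfl⟩ := QuotientAddGroup.mk_surjective q
    have := Finset.ext_iff.1 h a
    simpa [mk] using this
  · intro A hA
    have hA : t ∈ stab A := by simpa using hA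
    rw [mem_stab] at hA
    refine ⟨A.image mk, mem_univ _, ?_⟩
    ext a
    simp only [mem_filter, mem_univ, true_and, mem_image]
    constructor
    · rintro ⟨b, hb, hab⟩
      have : -b + a ∈ AddSubgroup.zmultiples t := QuotientAddGroup.eq.1 hab
      rw [mem_zmultiples_iff_mem_range_addOrderOf] at this
      simp only [mem_image, mem_range] at this
      obtain ⟨m, -, hm⟩ := this
      have : a = b + m • t := by rw [hm]; abel
      rw [this]
      clear this hm
      induction m with
      | zero => simpa using hb
      | succ m ih => rw [succ_nsmul, ← add_assoc, hA]; exact ih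
    · intro h; exact ⟨a, h, rfl⟩
  · intro B _
    rw [hcard, Nat.mul_div_cancel_left _ hd, pow_add, pow_mul, pow_mul X, neg_pow,
      neg_pow (X : ℂ[X]), mul_pow]
    ring

theorem char_sum {n : ℕ} [NeZero n] (t : ZMod n) (j : ℕ) :
    ∑ A : Finset (ZMod n) with A.card = j, (ZMod.stdAddChar (t * ∑ a ∈ A, a) : ℂ)
     = ∑ A : Finset (ZMod n) with A.card = j, if t ∈ stab A then (-1) ^ (j + j / addOrderOf t) else 0 := by
  have h := (poly_lhs t).trans (poly_rhs t).symm
  rw [Finset.prod_one_add, Finset.powerset_univ] at h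
  have h' := congrArg (fun p => Polynomial.coeff p j) h
  simp only [Polynomial.finsetSum_coeff] at h'
  rw [Finset.sum_filter, Finset.sum_filter]
  rw [Finset.sum_filter] at h'
  convert h' using 2 with A _ A _
  · rw [Finset.prod_mul_distrib, Finset.prod_const, ← map_prod, coeff_C_mul_X_pow]
    simp only [eq_comm (a := j), Finset.mul_sum]
    split_ifs
    · rw [addChar_sum]
    · rfl
  · have : ((-1) ^ (#A + #A / addOrderOf t) * X ^ #A : ℂ[X])
      = C ((-1) ^ (#A + #A / addOrderOf t)) * X ^ #A := by simp
    rw [this, coeff_C_mul_X_pow]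
    by_cases h1 : #A = j
    · subst h1; simp
    · simp [h1, Ne.symm h1]

theorem partA {n : ℕ} [NeZero n] (j : ℕ) :
    (n : ℂ) * (univ.filter (fun A : Finset (ZMod n) => A.card = j ∧ ∑ a ∈ A, a = 1)).card
      = ∑ A : Finset (ZMod n) with A.card = j,
        ∑ t ∈ stab A, ZMod.stdAddChar (-t) * (-1) ^ (j + j / addOrderOf t) := by
  have h1 : ∀ A : Finset (ZMod n), ∑ t : ZMod n, (ZMod.stdAddChar (t * (∑ a ∈ A, a - 1)) : ℂ)
     = if ∑ a ∈ A, a = 1 then (n : ℂ) else 0 := by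
    intro A
    rw [AddChar.sum_mulShift _ (ZMod.isPrimitive_stdAddChar n)]
    simp only [sub_eq_zero, ZMod.card]
    split_ifs <;> simp
  have h2 : ((univ.filter (fun A : Finset (ZMod n) => A.card = j ∧ ∑ a ∈ A, a = 1)).card : ℂ)
      = ∑ A : Finset (ZMod n) with A.card = j, if ∑ a ∈ A, a = 1 then (1 : ℂ) else 0 := by
    rw [Finset.sum_boole, Finset.filter_filter]
  rw [h2, Finset.mul_sum]
  simp only [mul_ite, mul_one, mul_zero, ← h1]
  rw [Finset.sum_comm]
  have h3 : ∀ t : ZMod n, ∑ A : Finset (ZMod n) with A.card = j,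
      (ZMod.stdAddChar (t * (∑ a ∈ A, a - 1)) : ℂ)
      = ∑ A : Finset (ZMod n) with A.card = j,
        if t ∈ stab A then ZMod.stdAddChar (-t) * (-1) ^ (j + j / addOrderOf t) else 0 := by
    intro t
    have := congrArg (fun z => (ZMod.stdAddChar (-t) : ℂ) * z) (char_sum t j)
    simp only [Finset.mul_sum, mul_ite, mul_zero] at this
    rw [← this]
    refine Finset.sum_congr rfl fun A _ => ?_
    rw [← AddChar.map_add_eq_mul, ← Finset.mul_sum]
    congr 1
    ring
  simp only [h3]
  rw [Finset.sum_comm]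
  refine Finset.sum_congr rfl fun A _ => ?_
  rw [← Finset.sum_filter]
  congr 1
  ext; simp

/-- number of elements of `A` among the first `m` residues -/
def cnt {n : ℕ} (A : Finset (ZMod n)) (m : ℕ) : ℕ :=
  ∑ l ∈ range m, if (l : ZMod n) ∈ A then 1 else 0

theorem cnt_succ {n : ℕ} (A : Finset (ZMod n)) (m : ℕ) :
    cnt A (m + 1) = cnt A m + if (m : ZMod n) ∈ A then 1 else 0 := by
  rw [cnt, sum_range_succ, cnt]

theorem cnt_add_stab {n : ℕ} [NeZero n] {A : Finset (ZMod n)} {v : ℕ}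
    (hv : (v : ZMod n) ∈ stab A) (m : ℕ) : cnt A (m + v) = cnt A m + cnt A v := by
  rw [mem_stab] at hv
  rw [add_comm m v, cnt, sum_range_add, add_comm, cnt, cnt]
  congr 1
  refine sum_congr rfl fun l _ => ?_
  rw [Nat.cast_add, add_comm (v : ZMod n)]
  simp only [hv]

theorem cnt_mul {n : ℕ} [NeZero n] {A : Finset (ZMod n)} {v : ℕ}
    (hv : (v : ZMod n) ∈ stab A) (r : ℕ) : cnt A (r * v) = r * cnt A v := by
  induction r with
  | zero => simp [cnt]
  | succ r ih => rw [Nat.succ_mul, cnt_add_stab hv, ih, Nat.succ_mul]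

theorem zero_mem_stab {n : ℕ} [NeZero n] (A : Finset (ZMod n)) : (0 : ZMod n) ∈ stab A := by
  simp [mem_stab]

theorem add_mem_stab {n : ℕ} [NeZero n] {A : Finset (ZMod n)} {s t : ZMod n}
    (hs : s ∈ stab A) (ht : t ∈ stab A) : s + t ∈ stab A := by
  rw [mem_stab] at *
  intro i
  rw [← add_assoc, ht, hs]

theorem neg_mem_stab {n : ℕ} [NeZero n] {A : Finset (ZMod n)} {s : ZMod n}
    (hs : s ∈ stab A) : -s ∈ stab A := by
  rw [mem_stab] at *
  intro i
  rw [← hs, neg_add_cancel_right]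

theorem cnt_n {n : ℕ} [NeZero n] (A : Finset (ZMod n)) : cnt A n = A.card := by
  have h := prod_zmod (n := n) (M := Multiplicative ℕ)
    (fun l => Multiplicative.ofAdd (if (l : ZMod n) ∈ A then 1 else 0))
  have h' : ∑ a : ZMod n, (if ((a.val : ℕ) : ZMod n) ∈ A then 1 else 0)
     = ∑ l ∈ range n, (if (l : ZMod n) ∈ A then 1 else 0) := h
  rw [cnt, ← h']
  simp

theorem natval {n : ℕ} [NeZero n] (t : ZMod n) : ((t.val : ℕ) : ZMod n) = t := by simp

theorem n_mul_cnt {n : ℕ} [NeZero n] {A : Finset (ZMod n)} {v : ℕ}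
    (hv : (v : ZMod n) ∈ stab A) : n * cnt A v = v * A.card := by
  rw [← cnt_mul hv, ← cnt_n, ← cnt_mul (v := n), mul_comm]
  simp [zero_mem_stab]

theorem sgn_eq {n : ℕ} [NeZero n] {A : Finset (ZMod n)} {t : ZMod n} (ht : t ∈ stab A) :
    ((-1) ^ (A.card + A.card / addOrderOf t) : ℂ)
      = if Odd A.card then 1 else (-1) ^ (cnt A t.val) := by
  have hn : 0 < n := Nat.pos_of_ne_zero (NeZero.ne n)
  have h := n_mul_cnt (A := A) (v := t.val) (by rwa [natval])
  have hd : addOrderOf t = n / n.gcd t.val := by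
    conv_lhs => rw [← natval t]
    exact ZMod.addOrderOf_coe _ hn.ne'
  rw [hd]
  generalize t.val = v at *
  generalize cnt A v = c at *
  generalize A.card = j at *
  obtain ⟨g, n', v', hg, hcop, hn', hv'⟩ := Nat.exists_coprime' (m := n) (n := v)
    (Nat.gcd_pos_of_pos_left _ hn)
  have hgg : n.gcd v = g := by
    rw [hn', hv', Nat.gcd_mul_right, hcop.gcd_eq_one, one_mul]
  have hn'0 : 0 < n' := by
    rcases Nat.eq_zero_or_pos n' with h0 | h0
    · simp [h0] at hn'; omega
    · exact h0
  have hq : n / n.gcd v = n' := by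
    rw [hgg]; exact Nat.div_eq_of_eq_mul_left hg hn'
  rw [hq]
  have h2 : n' * c = v' * j := by
    have : g * (n' * c) = g * (v' * j) := by
      calc g * (n' * c) = (n' * g) * c := by ring
        _ = (v' * g) * j := by rw [← hn', ← hv', h]
        _ = g * (v' * j) := by ring
    exact Nat.eq_of_mul_eq_mul_left hg this
  obtain ⟨q, rfl⟩ : n' ∣ j := hcop.dvd_of_dvd_mul_left ⟨c, h2.symm⟩
  have hc : c = v' * q := by
    apply Nat.eq_of_mul_eq_mul_left hn'0
    rw [h2]; ring
  rw [Nat.mul_div_cancel_left _ hn'0, hc]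
  split_ifs with ho
  · have := (Nat.odd_mul.1 ho).2
    exact (ho.add_odd this).neg_one_pow
  · have he : Even (n' * q) := Nat.not_odd_iff_even.1 ho
    rw [pow_add, he.neg_one_pow, one_mul]
    rcases Nat.even_or_odd q with hq | hq
    · rw [hq.neg_one_pow, (hq.mul_left v').neg_one_pow]
    · have hn2 : Even n' := by
        rcases Nat.even_mul.1 he with h | h
        · exact h
        · exact absurd hq (Nat.not_odd_iff_even.2 h)
      have hv2 : Odd v' := by
        by_contra hcon
        have h3 := Nat.dvd_gcd hn2.two_dvd (Nat.not_odd_iff_even.1 hcon).two_dvd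
        rw [hcop.gcd_eq_one] at h3
        omega
      rw [hq.neg_one_pow, (hv2.mul hq).neg_one_pow]

/-- the character sum attached to `A` -/
noncomputable def SS {n : ℕ} [NeZero n] (A : Finset (ZMod n)) : ℂ :=
  ∑ t ∈ stab A, ZMod.stdAddChar (-t) * (-1) ^ (A.card + A.card / addOrderOf t)

theorem SS_one {n : ℕ} [NeZero n] {A : Finset (ZMod n)} (h : ∀ t ∈ stab A, t = 0) :
    SS A = 1 := by
  have : stab A = {0} := by
    ext t; simp only [mem_singleton]
    exact ⟨h t, fun ht => ht ▸ zero_mem_stab A⟩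
  rw [SS, this]
  simp

theorem val_half {n : ℕ} [NeZero n] {t : ZMod n} (ht : t ≠ 0) (h2 : t + t = 0) :
    t.val + t.val = n := by
  have h0 : t.val ≠ 0 := by simpa using ht
  have hlt := ZMod.val_lt t
  have : n ∣ t.val + t.val := by
    rw [← ZMod.natCast_eq_zero_iff]; push_cast; rw [natval, h2]
  obtain ⟨c, hc⟩ := this
  have : c = 1 := by
    have h1 : n * c < n * 2 := by omega
    have h3 : 0 < n * c := by omega
    have := Nat.lt_of_mul_lt_mul_left h1
    have := Nat.pos_of_mul_pos_left h3
    omega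
  rw [hc, this, mul_one]

theorem cnt_half {n : ℕ} [NeZero n] {A : Finset (ZMod n)} {t : ZMod n} (hs : t ∈ stab A)
    (ht : t ≠ 0) (h2 : t + t = 0) : A.card = cnt A t.val + cnt A t.val := by
  rw [← cnt_add_stab (by rwa [natval]), val_half ht h2, cnt_n]

theorem SS_two {n : ℕ} [NeZero n] {A : Finset (ZMod n)} {t : ZMod n} (hs : t ∈ stab A)
    (ht : t ≠ 0) (h : ∀ u ∈ stab A, u + u = 0) :
    SS A = if Odd (cnt A t.val) then 2 else 0 := by
  have hst : stab A = {0, t} := by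
    ext u; simp only [mem_singleton, mem_insert]
    constructor
    · intro hu
      by_cases h0 : u = 0
      · exact Or.inl h0
      · right
        apply ZMod.val_injective n
        have := val_half h0 (h u hu)
        have := val_half ht (h t hs)
        omega
    · rintro (rfl | rfl)
      · exact zero_mem_stab A
      · exact hs
  have hc := cnt_half hs ht (h t hs)
  have hψ : (ZMod.stdAddChar t : ℂ) = -1 := by
    have h1 : (ZMod.stdAddChar t : ℂ) * ZMod.stdAddChar t = 1 := by
      rw [← AddChar.map_add_eq_mul, h t hs, AddChar.map_zero_eq_one]
    rcases mul_self_eq_one_iff.1 h1 with h1 | h1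
    · exact absurd (ZMod.injective_stdAddChar (h1.trans (AddChar.map_zero_eq_one _).symm)) ht
    · exact h1
  have hneg : -t = t := neg_eq_of_add_eq_zero_left (h t hs)
  rw [SS, hst, sum_pair (Ne.symm ht), hneg, hψ, sgn_eq hs, sgn_eq (zero_mem_stab A)]
  have hodd : ¬ Odd A.card := by rw [hc]; simp
  rw [if_neg hodd, if_neg hodd]
  split_ifs with ho
  · rw [ho.neg_one_pow]; simp [cnt]; norm_num
  · rw [(Nat.not_odd_iff_even.1 ho).neg_one_pow]; simp [cnt]

theorem sgn_add {n : ℕ} [NeZero n] {A : Finset (ZMod n)} {s t : ZMod n} (hs : s ∈ stab A)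
    (ht : t ∈ stab A) :
    ((-1) ^ (A.card + A.card / addOrderOf (s + t)) : ℂ)
     = (-1) ^ (A.card + A.card / addOrderOf s) * (-1) ^ (A.card + A.card / addOrderOf t) := by
  rw [sgn_eq hs, sgn_eq ht, sgn_eq (add_mem_stab hs ht)]
  split_ifs with ho
  · simp
  · have he : Even A.card := Nat.not_odd_iff_even.1 ho
    rw [← pow_add, ← cnt_add_stab (by rwa [natval])]
    rcases lt_or_ge (s.val + t.val) n with h | h
    · rw [ZMod.val_add_of_lt h]
    · rw [ZMod.val_add_val_of_le h, cnt_add_stab (by simp [zero_mem_stab]), cnt_n, pow_add,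
        he.neg_one_pow, mul_one]

theorem SS_zero {n : ℕ} [NeZero n] {A : Finset (ZMod n)} {u : ZMod n} (hs : u ∈ stab A)
    (h : u + u ≠ 0) : SS A = 0 := by
  have huu := add_mem_stab hs hs
  have key : SS A = ZMod.stdAddChar (-(u + u)) * SS A := by
    conv_lhs => rw [SS]
    rw [SS, Finset.mul_sum]
    symm
    refine Finset.sum_bij (fun t _ => t + (u + u)) ?_ ?_ ?_ ?_
    · intro t ht; exact add_mem_stab ht huu
    · intro a _ b _ hab; exact add_right_cancel hab
    · intro b hb
      exact ⟨b + -(u + u), add_mem_stab hb (neg_mem_stab huu), by abel⟩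
    · intro t ht
      rw [sgn_add ht huu, sgn_add hs hs, ← pow_add (-1 : ℂ) (A.card + A.card / addOrderOf u),
        Even.neg_one_pow ⟨_, rfl⟩, neg_add t (u + u), AddChar.map_add_eq_mul]
      ring
  have hne : (ZMod.stdAddChar (-(u + u)) : ℂ) ≠ 1 := by
    intro hcon
    have := ZMod.injective_stdAddChar (hcon.trans (AddChar.map_zero_eq_one _).symm)
    exact h (neg_eq_zero.1 this)
  have : (1 - ZMod.stdAddChar (-(u + u)) : ℂ) * SS A = 0 := by
    rw [sub_mul, one_mul, ← key, sub_self]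
  rcases mul_eq_zero.1 this with h | h
  · exact absurd (sub_eq_zero.1 h).symm hne
  · exact h

/-- `φ` orders the cyclic word with set of ones `A` compatibly -/
structure Comp {n : ℕ} (A : Finset (ZMod n)) (φ : ZMod n ≃ Fin n) : Prop where
  low : ∀ i k, i ∈ A → k ∉ A → φ i < φ k
  dec : ∀ i k, i ∈ A → k ∈ A → φ i < φ k → φ (k + 1) < φ (i + 1)
  inc : ∀ i k, i ∉ A → k ∉ A → φ i < φ k → φ (i + 1) < φ (k + 1)

/-- signed lexicographic value of the word of length `m` starting at `i` -/
def V {n : ℕ} (A : Finset (ZMod n)) : ℕ → ZMod n → ℤ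
  | 0, _ => 0
  | m + 1, i => if i ∈ A then - 3 ^ m - V A m (i + 1) else 3 ^ m + V A m (i + 1)

theorem V_bound {n : ℕ} (A : Finset (ZMod n)) (m : ℕ) :
    ∀ i, -3 ^ m < V A m i ∧ V A m i < 3 ^ m := by
  induction m with
  | zero => intro i; simp [V]
  | succ m ih =>
    intro i
    have := ih (i + 1)
    have h3 : (0 : ℤ) < 3 ^ m := by positivity
    rw [V, pow_succ]
    split_ifs <;> constructor <;> linarith

theorem V_neg {n : ℕ} {A : Finset (ZMod n)} (m : ℕ) {i : ZMod n} (hi : i ∈ A) :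
    V A (m + 1) i < 0 := by
  have := V_bound A m (i + 1)
  rw [V, if_pos hi]; linarith

theorem V_pos {n : ℕ} {A : Finset (ZMod n)} (m : ℕ) {i : ZMod n} (hi : i ∉ A) :
    0 < V A (m + 1) i := by
  have := V_bound A m (i + 1)
  rw [V, if_neg hi]; linarith

theorem V_dec {n : ℕ} {A : Finset (ZMod n)} (m : ℕ) {i k : ZMod n} (hi : i ∈ A) (hk : k ∈ A) :
    V A (m + 1) i < V A (m + 1) k ↔ V A m (k + 1) < V A m (i + 1) := by
  rw [V, V, if_pos hi, if_pos hk]; constructor <;> intro h <;> linarith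

theorem V_inc {n : ℕ} {A : Finset (ZMod n)} (m : ℕ) {i k : ZMod n} (hi : i ∉ A) (hk : k ∉ A) :
    V A (m + 1) i < V A (m + 1) k ↔ V A m (i + 1) < V A m (k + 1) := by
  rw [V, V, if_neg hi, if_neg hk]; constructor <;> intro h <;> linarith

theorem V_ref {n : ℕ} {A : Finset (ZMod n)} (m : ℕ) :
    ∀ i k, V A m i < V A m k → V A (m + 1) i < V A (m + 1) k := by
  induction m with
  | zero => intro i k h; simp [V] at h
  | succ m ih =>
    intro i k h
    by_cases hi : i ∈ A <;> by_cases hk : k ∈ A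
    · rw [V_dec _ hi hk] at h ⊢; exact ih _ _ h
    · exact (V_neg _ hi).trans (V_pos _ hk)
    · have := V_neg m hk
      have := V_pos m hi
      omega
    · rw [V_inc _ hi hk] at h ⊢; exact ih _ _ h

theorem V_eq_mem {n : ℕ} {A : Finset (ZMod n)} (m : ℕ) {i k : ZMod n}
    (h : V A (m + 1) i = V A (m + 1) k) : i ∈ A ↔ k ∈ A := by
  by_cases hi : i ∈ A <;> by_cases hk : k ∈ A
  · simp [hi, hk]
  · have := V_neg m hi
    have := V_pos m hk
    omega
  · have := V_neg m hk
    have := V_pos m hi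
    omega
  · simp [hi, hk]

theorem V_eq_succ {n : ℕ} {A : Finset (ZMod n)} (m : ℕ) {i k : ZMod n}
    (h : V A (m + 1) i = V A (m + 1) k) : V A m (i + 1) = V A m (k + 1) := by
  have hm := V_eq_mem m h
  rw [V, V] at h
  by_cases hi : i ∈ A
  · rw [if_pos hi, if_pos (hm.1 hi)] at h; linarith
  · rw [if_neg hi, if_neg (fun hk => hi (hm.2 hk))] at h; linarith

theorem V_tie {n : ℕ} {A : Finset (ZMod n)} (m : ℕ) :
    ∀ i k, V A m i = V A m k → ∀ l < m, (i + (l : ZMod n) ∈ A ↔ k + (l : ZMod n) ∈ A) := by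
  induction m with
  | zero => intro i k _ l hl; omega
  | succ m ih =>
    intro i k h l hl
    cases l with
    | zero => simpa using V_eq_mem m h
    | succ l =>
      have := ih _ _ (V_eq_succ m h) l (by omega)
      push_cast
      rw [show i + ((l : ZMod n) + 1) = i + 1 + l by ring,
        show k + ((l : ZMod n) + 1) = k + 1 + l by ring]
      exact this

theorem V_stab {n : ℕ} [NeZero n] {A : Finset (ZMod n)} {t : ZMod n} (ht : t ∈ stab A) (m : ℕ) :
    ∀ i, V A m (i + t) = V A m i := by
  induction m with
  | zero => intro i; rfl
  | succ m ih =>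
    intro i
    rw [V, V, show i + t + 1 = i + 1 + t by ring, ih]
    simp only [mem_stab.1 ht i]

theorem V_tie_stab {n : ℕ} [NeZero n] {A : Finset (ZMod n)} {i k : ZMod n}
    (h : V A n i = V A n k) : k - i ∈ stab A := by
  rw [mem_stab]
  intro x
  have := V_tie n i k h (x - i).val (ZMod.val_lt _)
  rw [natval] at this
  rw [show x + (k - i) = k + (x - i) by ring, ← this]
  simp

theorem V_n_eq {n : ℕ} [NeZero n] {A : Finset (ZMod n)} {i k : ZMod n}
    (h : V A n i = V A n k) (m : ℕ) : V A m i = V A m k := by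
  have := V_stab (V_tie_stab h) m i
  rw [← this]; congr 1; ring

theorem V_n_lt {n : ℕ} [NeZero n] {A : Finset (ZMod n)} {i k : ZMod n} :
    V A n i < V A n k ↔ V A (n + 1) i < V A (n + 1) k := by
  refine ⟨V_ref n i k, fun h => ?_⟩
  rcases lt_trichotomy (V A n i) (V A n k) with h1 | h1 | h1
  · exact h1
  · have := V_n_eq h1 (n + 1); omega
  · have := V_ref n _ _ h1; omega

theorem exists_rank {n : ℕ} [NeZero n] (K : ZMod n → ℤ) (hK : Function.Injective K) :
    ∃ φ : ZMod n ≃ Fin n, ∀ i k, φ i < φ k ↔ K i < K k := by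
  let _ : LinearOrder (ZMod n) := LinearOrder.lift' K hK
  let e := Fintype.orderIsoFinOfCardEq (ZMod n) (ZMod.card n)
  refine ⟨e.symm.toEquiv, fun i k => ?_⟩
  exact e.symm.lt_iff_lt

theorem exists_comp {n : ℕ} [NeZero n] (A : Finset (ZMod n)) (τ : ZMod n → ℤ)
    (hb : ∀ i, -1 ≤ τ i ∧ τ i ≤ 1) (hτ : ∀ i, τ (i + 1) = if i ∈ A then - τ i else τ i)
    (hinj : ∀ i, ∀ t ∈ stab A, τ (i + t) = τ i → t = 0) : ∃ φ, Comp A φ := by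
  have hKlt : ∀ i k, 3 * V A n i + τ i < 3 * V A n k + τ k ↔
      V A n i < V A n k ∨ (V A n i = V A n k ∧ τ i < τ k) := by
    intro i k
    have := hb i
    have := hb k
    omega
  have hK : Function.Injective (fun i => 3 * V A n i + τ i) := by
    intro i k h
    have h : 3 * V A n i + τ i = 3 * V A n k + τ k := h
    have := hb i
    have := hb k
    have h1 : V A n i = V A n k := by omega
    have h2 : τ i = τ k := by omega
    have := hinj i _ (V_tie_stab h1) (by rw [h2]; congr 1; ring)
    exact (sub_eq_zero.1 this).symm
  obtain ⟨φ, hφ⟩ := exists_rank _ hK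
  obtain ⟨N, hN⟩ : ∃ N, n = N + 1 := Nat.exists_eq_succ_of_ne_zero (NeZero.ne n)
  refine ⟨φ, ?_, ?_, ?_⟩
  · intro i k hi hk
    rw [hφ, hKlt]
    left
    rw [V_n_lt]
    exact (V_neg _ hi).trans (V_pos _ hk)
  · intro i k hi hk h
    rw [hφ, hKlt] at h ⊢
    rw [V_n_lt, V_dec _ hi hk] at h
    rcases h with h | ⟨h, h'⟩
    · exact Or.inl h
    · right
      refine ⟨(V_eq_succ n (V_n_eq h (n + 1))).symm, ?_⟩
      rw [hτ, hτ, if_pos hi, if_pos hk]; omega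
  · intro i k hi hk h
    rw [hφ, hKlt] at h ⊢
    rw [V_n_lt, V_inc _ hi hk] at h
    rcases h with h | ⟨h, h'⟩
    · exact Or.inl h
    · right
      refine ⟨V_eq_succ n (V_n_eq h (n + 1)), ?_⟩
      rw [hτ, hτ, if_neg hi, if_neg hk]; exact h'

theorem Comp.lt_of_dec {n : ℕ} {A : Finset (ZMod n)} {φ : ZMod n ≃ Fin n} (h : Comp A φ)
    {i k : ZMod n} (hi : i ∈ A) (hk : k ∈ A) (hlt : φ (k + 1) < φ (i + 1)) : φ i < φ k := by
  rcases lt_trichotomy (φ i) (φ k) with h1 | h1 | h1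
  · exact h1
  · rw [φ.injective h1] at hlt; exact absurd hlt (lt_irrefl _)
  · exact absurd hlt (h.dec _ _ hk hi h1).asymm

theorem Comp.lt_of_inc {n : ℕ} {A : Finset (ZMod n)} {φ : ZMod n ≃ Fin n} (h : Comp A φ)
    {i k : ZMod n} (hi : i ∉ A) (hk : k ∉ A) (hlt : φ (i + 1) < φ (k + 1)) : φ i < φ k := by
  rcases lt_trichotomy (φ i) (φ k) with h1 | h1 | h1
  · exact h1
  · rw [φ.injective h1] at hlt; exact absurd hlt (lt_irrefl _)
  · exact absurd hlt (h.inc _ _ hk hi h1).asymm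

theorem Comp.lt_of_V {n : ℕ} {A : Finset (ZMod n)} {φ : ZMod n ≃ Fin n} (h : Comp A φ) (m : ℕ) :
    ∀ i k, V A m i < V A m k → φ i < φ k := by
  induction m with
  | zero => intro i k h; simp [V] at h
  | succ m ih =>
    intro i k hlt
    by_cases hi : i ∈ A <;> by_cases hk : k ∈ A
    · rw [V_dec _ hi hk] at hlt; exact h.lt_of_dec hi hk (ih _ _ hlt)
    · exact h.low _ _ hi hk
    · have := V_neg m hk
      have := V_pos m hi
      omega
    · rw [V_inc _ hi hk] at hlt; exact h.lt_of_inc hi hk (ih _ _ hlt)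

theorem eq_of_order {n : ℕ} {φ φ' : ZMod n ≃ Fin n} (h : ∀ i k, φ i < φ k → φ' i < φ' k) :
    φ = φ' := by
  have hm : StrictMono (fun x : Fin n => φ' (φ.symm x)) := by
    intro x y hxy
    apply h
    simpa using hxy
  have h2 := (StrictMono.orderIsoOfSurjective _ hm
      (φ'.surjective.comp φ.symm.surjective))
  ext i
  have h3 : StrictMono.orderIsoOfSurjective _ hm
      (φ'.surjective.comp φ.symm.surjective) = OrderIso.refl _ := Subsingleton.elim _ _
  have := congrArg (fun e : Fin n ≃o Fin n => e (φ i)) h3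
  simp at this
  rw [this]

theorem Comp.delta {n : ℕ} [NeZero n] {A : Finset (ZMod n)} {φ : ZMod n ≃ Fin n} (h : Comp A φ)
    {t : ZMod n} (ht : t ∈ stab A) (m : ℕ) :
    φ (m : ZMod n) < φ (m + t) ↔
      if Even (cnt A m) then φ 0 < φ (0 + t) else φ (0 + t) < φ 0 := by
  by_cases h0 : t = 0
  · subst h0; simp
  induction m with
  | zero => simp [cnt]
  | succ m ih =>
    have hne : φ ((m : ZMod n) + t) ≠ φ m := by
      intro hh
      have := φ.injective hh
      simp [h0] at this
    have hne' : φ ((m : ZMod n) + 1 + t) ≠ φ (m + 1) := by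
      intro hh
      have := φ.injective hh
      simp [h0] at this
    have hne0 : φ (0 + t) ≠ φ 0 := by
      intro hh
      have := φ.injective hh
      simp [h0] at this
    have hmm := mem_stab.1 ht m
    have e : (m : ZMod n) + t + 1 = m + 1 + t := by ring
    rw [cnt_succ]
    push_cast
    by_cases hm : (m : ZMod n) ∈ A
    · have h1 : φ ((m : ZMod n) + 1) < φ (m + 1 + t) ↔ φ (m + t) < φ m := by
        rw [← e]
        exact ⟨h.lt_of_dec (hmm.2 hm) hm, h.dec _ _ (hmm.2 hm) hm⟩
      have h2 : φ ((m : ZMod n) + t) < φ m ↔ ¬ φ m < φ (m + t) :=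
        ⟨fun h => h.asymm, fun h => lt_of_le_of_ne (not_lt.1 h) hne⟩
      have h3 : φ (0 + t) < φ 0 ↔ ¬ φ 0 < φ (0 + t) :=
        ⟨fun h => h.asymm, fun h => lt_of_le_of_ne (not_lt.1 h) hne0⟩
      rw [if_pos hm, h1, h2, ih]
      by_cases hev : Even (cnt A m)
      · rw [if_pos hev, if_neg (by rw [Nat.even_add_one]; exact not_not.2 hev), h3]
      · rw [if_neg hev, if_pos (Nat.even_add_one.2 hev), h3, not_not]
    · have hm' := fun hh => hm (hmm.1 hh)
      have h1 : φ ((m : ZMod n) + 1) < φ (m + 1 + t) ↔ φ m < φ (m + t) := by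
        rw [← e]
        exact ⟨h.lt_of_inc hm hm', h.inc _ _ hm hm'⟩
      rw [if_neg hm, h1, ih]; rfl

theorem Comp.odd_cnt {n : ℕ} [NeZero n] {A : Finset (ZMod n)} {φ : ZMod n ≃ Fin n} (h : Comp A φ)
    {v : ℕ} (ht : (v : ZMod n) ∈ stab A) (h0 : (v : ZMod n) ≠ 0) : Odd (cnt A v) := by
  by_contra hcon
  have hev := Nat.not_odd_iff_even.1 hcon
  have hd : ∀ r : ℕ, φ ((r * v : ℕ) : ZMod n) < φ (((r + 1) * v : ℕ) : ZMod n) ↔ φ 0 < φ (0 + v) := by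
    intro r
    have := h.delta ht (r * v)
    rw [cnt_mul ht, if_pos (hev.mul_left r)] at this
    rw [← this, Nat.succ_mul, Nat.cast_add]
  have hend : φ ((n * v : ℕ) : ZMod n) = φ 0 := by simp
  have hn : 0 < n := Nat.pos_of_ne_zero (NeZero.ne n)
  rcases lt_trichotomy (φ 0) (φ (0 + v)) with h1 | h1 | h1
  · have hm : StrictMono (fun r : ℕ => φ ((r * v : ℕ) : ZMod n)) :=
      strictMono_nat_of_lt_succ fun r => (hd r).2 h1
    have := hm hn
    simp at this
  · have := φ.injective h1
    simp at this
    exact h0 this.symm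
  · have hm : StrictAnti (fun r : ℕ => φ ((r * v : ℕ) : ZMod n)) := by
      refine strictAnti_nat_of_succ_lt fun r => ?_
      have h2 := mt (hd r).1 h1.asymm
      refine lt_of_le_of_ne (not_lt.1 h2) fun hh => ?_
      have := φ.injective hh
      rw [Nat.succ_mul, Nat.cast_add] at this
      simp at this
      exact h0 this
    have := hm hn
    simp at this

theorem Comp.unique {n : ℕ} [NeZero n] {A : Finset (ZMod n)} {φ φ' : ZMod n ≃ Fin n}
    (h : Comp A φ) (h' : Comp A φ')
    (hs : ∀ t ∈ stab A, t ≠ 0 → (φ 0 < φ (0 + t) ↔ φ' 0 < φ' (0 + t))) : φ = φ' := by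
  apply eq_of_order
  intro i k hik
  rcases lt_trichotomy (V A n i) (V A n k) with h1 | h1 | h1
  · exact h'.lt_of_V n _ _ h1
  · have ht := V_tie_stab h1
    have h0 : k - i ≠ 0 := by
      intro h0
      rw [sub_eq_zero.1 h0] at hik
      exact lt_irrefl _ hik
    have hst := hs _ ht h0
    have d := h.delta ht i.val
    have d' := h'.delta ht i.val
    have hne : ∀ φ : ZMod n ≃ Fin n, φ (0 + (k - i)) < φ 0 ↔ ¬ φ 0 < φ (0 + (k - i)) := by
      intro φ
      refine ⟨fun h => h.asymm, fun h => lt_of_le_of_ne (not_lt.1 h) ?_⟩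
      intro hh
      have := φ.injective hh
      rw [zero_add] at this
      exact h0 this
    rw [natval, add_sub_cancel, hne, hst] at d
    rw [natval, add_sub_cancel, hne, ← d] at d'
    exact d'.2 hik
  · exact absurd (h.lt_of_V n _ _ h1) hik.asymm

theorem Comp.shift {n : ℕ} [NeZero n] {A : Finset (ZMod n)} {φ : ZMod n ≃ Fin n} (h : Comp A φ)
    {t : ZMod n} (ht : t ∈ stab A) : Comp A ((Equiv.addRight t).trans φ) := by
  rw [mem_stab] at ht
  have e : ∀ i : ZMod n, i + 1 + t = i + t + 1 := fun i => by ring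
  refine ⟨?_, ?_, ?_⟩
  · intro i k hi hk
    exact h.low _ _ ((ht i).2 hi) (fun hh => hk ((ht k).1 hh))
  · intro i k hi hk hlt
    have := h.dec _ _ ((ht i).2 hi) ((ht k).2 hk) hlt
    simpa [e] using this
  · intro i k hi hk hlt
    have := h.inc _ _ (fun hh => hi ((ht i).1 hh)) (fun hh => hk ((ht k).1 hh)) hlt
    simpa [e] using this

theorem tau_cast {n : ℕ} [NeZero n] {A : Finset (ZMod n)} (he : Even A.card) (m : ℕ) :
    ((-1) ^ cnt A (m : ZMod n).val : ℤ) = (-1) ^ cnt A m := by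
  have hn : (n : ZMod n) ∈ stab A := by simp [zero_mem_stab]
  have hc : cnt A m = cnt A (m % n) + (m / n) * A.card := by
    have h := cnt_add_stab (A := A) (v := (m / n) * n) (by simp [zero_mem_stab]) (m % n)
    rw [cnt_mul hn, cnt_n] at h
    rw [← h]
    congr 1
    exact (Nat.mod_add_div' m n).symm
  rw [ZMod.val_natCast, hc, pow_add, (he.mul_left _).neg_one_pow, mul_one]

theorem exists_comp_two {n : ℕ} [NeZero n] {A : Finset (ZMod n)} {t : ZMod n} (hs : t ∈ stab A)
    (ht : t ≠ 0) (h : ∀ u ∈ stab A, u = 0 ∨ u = t) (ho : Odd (cnt A t.val)) (he : Even A.card) :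
    ∃ φ, Comp A φ := by
  apply exists_comp A (fun i => (-1) ^ cnt A i.val)
  · intro i
    rcases neg_one_pow_eq_or ℤ (cnt A i.val) with h1 | h1 <;> simp [h1]
  · intro i
    have h1 : i + 1 = ((i.val + 1 : ℕ) : ZMod n) := by push_cast; rw [natval]
    rw [h1, tau_cast he, cnt_succ, natval]
    split_ifs
    · rw [pow_succ]; ring
    · rfl
  · intro i u hu hiu
    rcases h u hu with h0 | rfl
    · exact h0
    · exfalso
      have h1 : i + u = ((i.val + u.val : ℕ) : ZMod n) := by push_cast; rw [natval, natval]
      rw [h1, tau_cast he, cnt_add_stab (by rwa [natval]), pow_add, ho.neg_one_pow] at hiu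
      rcases neg_one_pow_eq_or ℤ (cnt A i.val) with h1 | h1 <;> simp [h1] at hiu

open Classical in
theorem fiber_card {n : ℕ} [NeZero n] (A : Finset (ZMod n)) :
    ((univ.filter (fun φ : ZMod n ≃ Fin n => Comp A φ)).card : ℂ) = SS A := by
  by_cases h3 : ∃ u ∈ stab A, u + u ≠ 0
  · obtain ⟨u, hu, huu⟩ := h3
    rw [SS_zero hu huu]
    have : (univ.filter (fun φ : ZMod n ≃ Fin n => Comp A φ)) = ∅ := by
      rw [Finset.filter_eq_empty_iff]
      intro φ _ hφ
      have hc : ((u.val + u.val : ℕ) : ZMod n) = u + u := by push_cast; rw [natval]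
      have := hφ.odd_cnt (v := u.val + u.val) (by rw [hc]; exact add_mem_stab hu hu)
        (by rw [hc]; exact huu)
      rw [cnt_add_stab (by rwa [natval])] at this
      exact (Nat.not_odd_iff_even.2 ⟨_, rfl⟩) this
    rw [this]; simp
  push Not at h3
  by_cases h1 : ∀ t ∈ stab A, t = 0
  · rw [SS_one h1]
    obtain ⟨φ, hφ⟩ := exists_comp A (fun _ => 0) (by simp) (by simp) (fun i t ht _ => h1 t ht)
    have : (univ.filter (fun φ : ZMod n ≃ Fin n => Comp A φ)) = {φ} := by
      ext φ'
      simp only [mem_filter, mem_univ, true_and, mem_singleton]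
      constructor
      · intro h
        exact h.unique hφ fun t ht h0 => absurd (h1 t ht) h0
      · rintro rfl; exact hφ
    rw [this]; simp
  push Not at h1
  obtain ⟨t, hs, ht⟩ := h1
  rw [SS_two hs ht h3]
  have hst : ∀ u ∈ stab A, u = 0 ∨ u = t := by
    intro u hu
    by_cases h0 : u = 0
    · exact Or.inl h0
    · right
      apply ZMod.val_injective n
      have := val_half h0 (h3 u hu)
      have := val_half ht (h3 t hs)
      omega
  split_ifs with ho
  · have he : Even A.card := ⟨_, cnt_half hs ht (h3 t hs)⟩
    obtain ⟨φ, hφ⟩ := exists_comp_two hs ht hst ho he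
    have hφ' := hφ.shift hs
    have hne : φ t ≠ φ 0 := fun hh => ht (φ.injective hh)
    have hnot : ((Equiv.addRight t).trans φ) 0 < ((Equiv.addRight t).trans φ) (0 + t) ↔
        ¬ (φ 0 < φ (0 + t)) := by
      simp only [Equiv.trans_apply, Equiv.coe_addRight, zero_add, h3 t hs]
      exact ⟨fun h => h.asymm, fun h => lt_of_le_of_ne (not_lt.1 h) hne⟩
    have : (univ.filter (fun φ : ZMod n ≃ Fin n => Comp A φ))
        = {φ, (Equiv.addRight t).trans φ} := by
      ext φ'
      simp only [mem_filter, mem_univ, true_and, mem_singleton, mem_insert]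
      constructor
      · intro h
        by_cases hc : φ' 0 < φ' (0 + t) ↔ φ 0 < φ (0 + t)
        · left
          refine h.unique hφ fun u hu h0 => ?_
          rcases hst u hu with h' | rfl
          · exact absurd h' h0
          · exact hc
        · right
          refine h.unique hφ' fun u hu h0 => ?_
          rcases hst u hu with h' | rfl
          · exact absurd h' h0
          · rw [hnot]; tauto
      · rintro (rfl | rfl)
        · exact hφ
        · exact hφ'
    rw [this, card_pair]
    · simp
    · intro hh
      rw [← hh] at hnot
      tauto
  · have : (univ.filter (fun φ : ZMod n ≃ Fin n => Comp A φ)) = ∅ := by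
      rw [Finset.filter_eq_empty_iff]
      intro φ _ hφ
      exact ho (hφ.odd_cnt (by rwa [natval]) (by rwa [natval]))
    rw [this]; simp

/-- elements mapped to the first `j` positions -/
def lowSet {n : ℕ} [NeZero n] (j : ℕ) (φ : ZMod n ≃ Fin n) : Finset (ZMod n) :=
  univ.filter (fun i => (φ i).val < j)

theorem mem_lowSet {n : ℕ} [NeZero n] {j : ℕ} {φ : ZMod n ≃ Fin n} {i : ZMod n} :
    i ∈ lowSet j φ ↔ (φ i).val < j := by simp [lowSet]

theorem card_lowSet {n : ℕ} [NeZero n] {j : ℕ} (hj : j ≤ n) (φ : ZMod n ≃ Fin n) :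
    (lowSet j φ).card = j := by
  have : (lowSet j φ).map φ.toEmbedding = univ.filter (fun x : Fin n => x.val < j) := by
    ext x
    simp only [mem_map_equiv, mem_lowSet, mem_filter, mem_univ, true_and, Equiv.apply_symm_apply]
  rw [← card_map φ.toEmbedding, this, Fin.card_filter_val_lt]
  omega

theorem Comp.eq_lowSet {n : ℕ} [NeZero n] {A : Finset (ZMod n)} {φ : ZMod n ≃ Fin n}
    (h : Comp A φ) : lowSet A.card φ = A := by
  ext i
  rw [mem_lowSet]
  constructor
  · intro hi
    by_contra hA
    have h1 : A.map φ.toEmbedding ⊆ Iio (φ i) := by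
      intro x hx
      obtain ⟨a, ha, rfl⟩ := mem_map.1 hx
      exact mem_Iio.2 (h.low _ _ ha hA)
    have h2 := card_le_card h1
    rw [card_map, Fin.card_Iio] at h2
    omega
  · intro hi
    have h1 : Iic (φ i) ⊆ A.map φ.toEmbedding := by
      intro x hx
      rw [mem_map_equiv]
      by_contra hA
      have h3 := h.low _ _ hi hA
      rw [Equiv.apply_symm_apply] at h3
      exact absurd (mem_Iic.1 hx) (not_le.2 h3)
    have h2 := card_le_card h1
    rw [card_map, Fin.card_Iic] at h2
    omega

open Classical in
theorem sum_fibers {n : ℕ} [NeZero n] {j : ℕ} (hj : j ≤ n) :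
    ∑ A : Finset (ZMod n) with A.card = j, (univ.filter (fun φ : ZMod n ≃ Fin n => Comp A φ)).card
     = (univ.filter (fun φ : ZMod n ≃ Fin n => Comp (lowSet j φ) φ)).card := by
  rw [Finset.card_eq_sum_card_fiberwise (f := lowSet j)
    (t := univ.filter (fun A : Finset (ZMod n) => A.card = j))]
  · refine sum_congr rfl fun A hA => ?_
    have hA : A.card = j := by simpa using hA
    congr 1
    ext φ
    simp only [mem_filter, mem_univ, true_and]
    constructor
    · intro h
      have := h.eq_lowSet
      rw [hA] at this
      rw [this]; exact ⟨h, rfl⟩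
    · rintro ⟨h, h'⟩
      rwa [h'] at h
  · intro φ _
    simp [card_lowSet hj]

/-- decreasing on the first `j` positions, increasing on the others -/
def FoldAt (n j : ℕ) (σ : Equiv.Perm (Fin n)) : Prop :=
  (∀ a b : Fin n, a < b → b.val < j → σ b < σ a) ∧
  (∀ a b : Fin n, a < b → j ≤ a.val → σ a < σ b)

/-- the permutation induced by the shift -/
def shiftPerm {n : ℕ} (φ : ZMod n ≃ Fin n) : Equiv.Perm (Fin n) :=
  φ.symm.trans ((Equiv.addRight 1).trans φ)

theorem shiftPerm_apply {n : ℕ} (φ : ZMod n ≃ Fin n) (i : ZMod n) :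
    shiftPerm φ (φ i) = φ (i + 1) := by simp [shiftPerm]

theorem shiftPerm_pow {n : ℕ} (φ : ZMod n ≃ Fin n) (i : ZMod n) (m : ℕ) :
    (shiftPerm φ ^ m) (φ i) = φ (i + m) := by
  induction m with
  | zero => simp
  | succ m ih =>
    rw [pow_succ', Equiv.Perm.mul_apply, ih, shiftPerm_apply]
    push_cast
    rw [add_assoc]

theorem comp_iff_fold {n : ℕ} [NeZero n] (j : ℕ) (φ : ZMod n ≃ Fin n) :
    Comp (lowSet j φ) φ ↔ FoldAt n j (shiftPerm φ) := by
  constructor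
  · intro h
    constructor
    · intro a b hab hb
      have h1 := h.dec (φ.symm a) (φ.symm b) (by rw [mem_lowSet]; simp; omega)
        (by rw [mem_lowSet]; simp; omega) (by simpa using hab)
      rwa [← shiftPerm_apply, ← shiftPerm_apply, Equiv.apply_symm_apply,
        Equiv.apply_symm_apply] at h1
    · intro a b hab hb
      have h1 := h.inc (φ.symm a) (φ.symm b) (by rw [mem_lowSet]; simp; omega)
        (by rw [mem_lowSet]; simp; omega) (by simpa using hab)
      rwa [← shiftPerm_apply, ← shiftPerm_apply, Equiv.apply_symm_apply,
        Equiv.apply_symm_apply] at h1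
  · rintro ⟨h1, h2⟩
    refine ⟨?_, ?_, ?_⟩
    · intro i k hi hk
      rw [mem_lowSet] at hi hk
      rw [Fin.lt_def]; omega
    · intro i k hi hk hlt
      rw [mem_lowSet] at hi hk
      rw [← shiftPerm_apply, ← shiftPerm_apply]
      exact h1 _ _ hlt hk
    · intro i k hi hk hlt
      rw [mem_lowSet] at hi hk
      rw [← shiftPerm_apply, ← shiftPerm_apply]
      exact h2 _ _ hlt (by omega)

theorem shiftPerm_cyclic {n : ℕ} [NeZero n] (φ : ZMod n ≃ Fin n) :
    IsCyclicPerm n (shiftPerm φ) := by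
  intro x y
  refine ⟨((φ.symm y - φ.symm x).val : ℕ), ?_⟩
  rw [zpow_natCast]
  conv_lhs => rw [← φ.apply_symm_apply x]
  rw [shiftPerm_pow, natval]
  simp

theorem exists_shiftPerm {n : ℕ} [NeZero n] {σ : Equiv.Perm (Fin n)} (h : IsCyclicPerm n σ)
    (x : Fin n) : ∃ φ : ZMod n ≃ Fin n, φ 0 = x ∧ shiftPerm φ = σ := by
  have hc : σ.IsCycleOn ((univ : Finset (Fin n)) : Set (Fin n)) := by
    refine ⟨?_, fun a _ b _ => h a b⟩
    simpa using σ.bijective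
  have hp : (σ ^ n) x = x := by
    have := hc.pow_card_apply (mem_univ x)
    simpa using this
  have hmod : ∀ m : ℕ, (σ ^ (m % n)) x = (σ ^ m) x := by
    intro m
    have hq : ∀ q : ℕ, (σ ^ (n * q)) x = x := by
      intro q
      induction q with
      | zero => simp
      | succ q ih => rw [Nat.mul_succ, pow_add, Equiv.Perm.mul_apply, hp, ih]
    conv_rhs => rw [← Nat.mod_add_div m n, pow_add, Equiv.Perm.mul_apply, hq]
  have hsurj : Function.Surjective (fun i : ZMod n => (σ ^ i.val) x) := by
    intro y
    obtain ⟨m, hm, hy⟩ := hc.exists_pow_eq (mem_univ x) (mem_univ y)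
    refine ⟨(m : ZMod n), ?_⟩
    simp only
    rw [ZMod.val_natCast, hmod, hy]
  have hbij := (Fintype.bijective_iff_surjective_and_card _).2 ⟨hsurj, by simp [ZMod.card]⟩
  let φ := Equiv.ofBijective _ hbij
  have hφ : ∀ i, φ i = (σ ^ i.val) x := fun i => rfl
  refine ⟨φ, by rw [hφ]; simp, ?_⟩
  ext y : 1
  obtain ⟨i, rfl⟩ := φ.surjective y
  rw [shiftPerm_apply, hφ, hφ]
  have h1 : i + 1 = ((i.val + 1 : ℕ) : ZMod n) := by push_cast; rw [natval]
  rw [h1, ZMod.val_natCast, hmod, pow_succ', Equiv.Perm.mul_apply]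

open Classical in
theorem card_phi {n : ℕ} [NeZero n] (j : ℕ) :
    (univ.filter (fun φ : ZMod n ≃ Fin n => Comp (lowSet j φ) φ)).card
     = n * (univ.filter (fun σ : Equiv.Perm (Fin n) => IsCyclicPerm n σ ∧ FoldAt n j σ)).card := by
  have : n * (univ.filter (fun σ : Equiv.Perm (Fin n) => IsCyclicPerm n σ ∧ FoldAt n j σ)).card
    = ((univ : Finset (Fin n)) ×ˢ
      (univ.filter (fun σ : Equiv.Perm (Fin n) => IsCyclicPerm n σ ∧ FoldAt n j σ))).card := by
    rw [card_product, card_univ, Fintype.card_fin]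
  rw [this]
  refine Finset.card_bij (fun φ _ => (φ 0, shiftPerm φ)) ?_ ?_ ?_
  · intro φ hφ
    have hφ : Comp (lowSet j φ) φ := by simpa using hφ
    simp only [mem_product, mem_univ, true_and, mem_filter]
    exact ⟨shiftPerm_cyclic φ, (comp_iff_fold j φ).1 hφ⟩
  · intro φ _ φ' _ h
    have h0 : φ 0 = φ' 0 := congrArg Prod.fst h
    have h1 : shiftPerm φ = shiftPerm φ' := congrArg Prod.snd h
    ext i : 1
    have e1 := shiftPerm_pow φ 0 i.val
    have e2 := shiftPerm_pow φ' 0 i.val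
    rw [natval, zero_add] at e1 e2
    rw [← e1, ← e2, h0, h1]
  · rintro ⟨x, σ⟩ h
    simp only [mem_product, mem_univ, true_and, mem_filter] at h
    obtain ⟨φ, h0, h1⟩ := exists_shiftPerm h.1 x
    refine ⟨φ, ?_, by rw [h0, h1]⟩
    simp only [mem_filter, mem_univ, true_and]
    rw [comp_iff_fold, h1]
    exact h.2

open Classical in
theorem main_count {n : ℕ} [NeZero n] {j : ℕ} (hj : j ≤ n) :
    (univ.filter (fun A : Finset (ZMod n) => A.card = j ∧ ∑ a ∈ A, a = 1)).card
     = (univ.filter (fun σ : Equiv.Perm (Fin n) => IsCyclicPerm n σ ∧ FoldAt n j σ)).card := by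
  have hn : n ≠ 0 := NeZero.ne n
  have h1 := partA (n := n) j
  have h2 : ∑ A : Finset (ZMod n) with A.card = j,
        ∑ t ∈ stab A, ZMod.stdAddChar (-t) * (-1) ^ (j + j / addOrderOf t)
      = ∑ A : Finset (ZMod n) with A.card = j,
        ((univ.filter (fun φ : ZMod n ≃ Fin n => Comp A φ)).card : ℂ) := by
    refine sum_congr rfl fun A hA => ?_
    have hA : A.card = j := by simpa using hA
    subst hA
    rw [fiber_card, SS]
  rw [h2, ← Nat.cast_sum, sum_fibers hj, card_phi] at h1
  have h3 : n * (univ.filter (fun A : Finset (ZMod n) => A.card = j ∧ ∑ a ∈ A, a = 1)).card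
     = n * (univ.filter (fun σ : Equiv.Perm (Fin n) => IsCyclicPerm n σ ∧ FoldAt n j σ)).card := by
    exact_mod_cast h1
  exact Nat.eq_of_mul_eq_mul_left (Nat.pos_of_ne_zero hn) h3

theorem SCard_eq {n : ℕ} [NeZero n] (j : ℕ) :
    SCard n j (1 % n) = (univ.filter (fun A : Finset (ZMod n) =>
      0 ∉ A ∧ A.card = j ∧ ∑ a ∈ A, a = 1)).card := by
  have hn : 0 < n := Nat.pos_of_ne_zero (NeZero.ne n)
  have hsum : ∀ A : Finset (ZMod n), (∑ a ∈ A.image ZMod.val, a) % n = 1 % n ↔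
      ∑ a ∈ A, a = 1 := by
    intro A
    rw [sum_image (fun a _ b _ h => ZMod.val_injective n h)]
    have := ZMod.natCast_eq_natCast_iff' (∑ a ∈ A, a.val) 1 n
    rw [← this]
    push_cast
    simp only [natval]
  symm
  rw [SCard]
  refine Finset.card_bij (fun A _ => A.image ZMod.val) ?_ ?_ ?_
  · intro A hA
    simp only [mem_filter, mem_univ, true_and] at hA
    simp only [mem_filter, mem_powerset]
    refine ⟨?_, ?_, (hsum A).2 hA.2.2⟩
    · intro x hx
      obtain ⟨a, ha, rfl⟩ := mem_image.1 hx
      have h0 : a.val ≠ 0 := by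
        intro h0
        rw [ZMod.val_eq_zero] at h0
        exact hA.1 (h0 ▸ ha)
      have := ZMod.val_lt a
      rw [mem_Icc]; omega
    · rw [card_image_of_injective _ (ZMod.val_injective n), hA.2.1]
  · intro A _ B _ h
    exact image_injective (ZMod.val_injective n) h
  · intro B hB
    simp only [mem_filter, mem_powerset] at hB
    obtain ⟨hsub, hc, hs⟩ := hB
    have hlt : ∀ b ∈ B, 1 ≤ b ∧ b < n := by
      intro b hb
      have := mem_Icc.1 (hsub hb)
      omega
    have himg : (B.image (fun b : ℕ => (b : ZMod n))).image ZMod.val = B := by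
      rw [image_image]
      ext x
      simp only [mem_image, Function.comp]
      constructor
      · rintro ⟨b, hb, rfl⟩
        rwa [ZMod.val_cast_of_lt (hlt b hb).2]
      · intro hx
        exact ⟨x, hx, ZMod.val_cast_of_lt (hlt x hx).2⟩
    refine ⟨B.image (fun b : ℕ => (b : ZMod n)), ?_, himg⟩
    simp only [mem_filter, mem_univ, true_and]
    refine ⟨?_, ?_, ?_⟩
    · intro h0
      obtain ⟨b, hb, h0⟩ := mem_image.1 h0
      have := hlt b hb
      have h2 := ZMod.val_cast_of_lt this.2
      rw [h0, ZMod.val_zero] at h2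
      omega
    · rw [← card_image_of_injective _ (ZMod.val_injective n), himg, hc]
    · rw [← hsum, himg, hs]

theorem Sbar_zero {n : ℕ} [NeZero n] :
    (univ.filter (fun A : Finset (ZMod n) => A.card = 0 ∧ ∑ a ∈ A, a = 1)).card
      = SCard n 0 (1 % n) := by
  rw [SCard_eq]
  congr 1
  ext A
  simp only [mem_filter, mem_univ, true_and, card_eq_zero]
  constructor
  · rintro ⟨rfl, h⟩; simpa using h
  · rintro ⟨_, h⟩; exact h

theorem Sbar_succ {n : ℕ} [NeZero n] (j : ℕ) :
    (univ.filter (fun A : Finset (ZMod n) => A.card = j + 1 ∧ ∑ a ∈ A, a = 1)).card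
      = SCard n (j + 1) (1 % n) + SCard n j (1 % n) := by
  rw [SCard_eq, SCard_eq, ← card_filter_add_card_filter_not (fun A : Finset (ZMod n) => 0 ∉ A),
    filter_filter, filter_filter]
  congr 1
  · congr 1
    ext A
    simp only [mem_filter, mem_univ, true_and]
    tauto
  · refine Finset.card_bij (fun A _ => A.erase 0) ?_ ?_ ?_
    · intro A hA
      simp only [mem_filter, mem_univ, true_and, not_not] at hA ⊢
      obtain ⟨⟨hc, hs⟩, h0⟩ := hA
      refine ⟨by simp, by rw [card_erase_of_mem h0, hc]; rfl, ?_⟩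
      rw [← hs]
      exact sum_erase (f := fun a : ZMod n => a) A rfl
    · intro A hA B hB h
      simp only [mem_filter, mem_univ, true_and, not_not] at hA hB
      rw [← insert_erase hA.2, ← insert_erase hB.2, h]
    · intro B hB
      simp only [mem_filter, mem_univ, true_and] at hB
      obtain ⟨h0, hc, hs⟩ := hB
      refine ⟨insert 0 B, ?_, erase_insert h0⟩
      simp only [mem_filter, mem_univ, true_and, not_not]
      refine ⟨⟨by rw [card_insert_of_notMem h0, hc], ?_⟩, mem_insert_self _ _⟩
      rw [sum_insert h0, hs, zero_add]

open Classical in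
/-- number of cyclic V-shaped permutations, as a finset cardinality -/
noncomputable def CVP (n k : ℕ) : ℕ :=
  (univ.filter (fun σ : Equiv.Perm (Fin n) => IsCyclicPerm n σ ∧ IsVShapedAt n k σ)).card

open Classical in
theorem fold_zero (n : ℕ) :
    (univ.filter (fun σ : Equiv.Perm (Fin n) => IsCyclicPerm n σ ∧ FoldAt n 0 σ)).card
      = CVP n 1 := by
  rw [CVP]
  congr 1
  ext σ
  simp only [mem_filter, mem_univ, true_and]
  refine and_congr_right fun _ => ?_
  constructor
  · rintro ⟨_, h⟩
    exact ⟨fun i j hij hj => by rw [Fin.lt_def] at hij; omega, fun i j hij _ => h i j hij (by omega)⟩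
  · rintro ⟨_, h⟩
    exact ⟨fun i j hij hj => by omega, fun i j hij _ => h i j hij (by omega)⟩

open Classical in
theorem fold_succ {n m : ℕ} (hm : m + 1 < n) :
    (univ.filter (fun σ : Equiv.Perm (Fin n) => IsCyclicPerm n σ ∧ FoldAt n (m + 1) σ)).card
      = CVP n (m + 2) + CVP n (m + 1) := by
  let a : Fin n := ⟨m, by omega⟩
  let b : Fin n := ⟨m + 1, hm⟩
  have hab : a < b := by rw [Fin.lt_def]; simp [a, b]
  rw [CVP, CVP, ← card_filter_add_card_filter_not (fun σ : Equiv.Perm (Fin n) => σ b < σ a),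
    filter_filter, filter_filter]
  congr 2
  · ext σ
    simp only [mem_filter, mem_univ, true_and, and_assoc]
    refine and_congr_right fun _ => ?_
    constructor
    · rintro ⟨⟨h1, h2⟩, h3⟩
      refine ⟨fun i j hij hj => ?_, fun i j hij hi => h2 i j hij (by omega)⟩
      by_cases hjb : j.val < m + 1
      · exact h1 i j hij hjb
      · have hj' : j = b := Fin.ext (by simp [b]; omega)
        rw [hj'] at hij ⊢
        by_cases hia : i = a
        · rw [hia]; exact h3
        · have hlt : i < a := by
            rw [Fin.lt_def] at hij ⊢
            have : i.val ≠ a.val := fun hh => hia (Fin.ext hh)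
            simp [a, b] at *
            omega
          exact h3.trans (h1 i a hlt (by simp [a]))
    · rintro ⟨h1, h2⟩
      refine ⟨⟨fun i j hij hj => h1 i j hij (by omega), fun i j hij hi => ?_⟩, ?_⟩
      · exact h2 i j hij (by omega)
      · exact h1 a b hab (by simp [b])
  · ext σ
    simp only [mem_filter, mem_univ, true_and, and_assoc]
    refine and_congr_right fun _ => ?_
    constructor
    · rintro ⟨⟨h1, h2⟩, h3⟩
      have h3 : σ a < σ b := lt_of_le_of_ne (not_lt.1 h3) (fun hh => hab.ne (σ.injective hh))
      refine ⟨fun i j hij hj => h1 i j hij (by omega), fun i j hij hi => ?_⟩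
      by_cases hia : m + 1 ≤ i.val
      · exact h2 i j hij hia
      · have hi' : i = a := Fin.ext (by simp [a]; omega)
        rw [hi'] at hij ⊢
        by_cases hjb : j = b
        · rw [hjb]; exact h3
        · have hlt : b < j := by
            rw [Fin.lt_def] at hij ⊢
            have : j.val ≠ b.val := fun hh => hjb (Fin.ext hh)
            simp [a, b] at *
            omega
          exact h3.trans (h2 b j hlt (by simp [b]))
    · rintro ⟨h1, h2⟩
      refine ⟨⟨fun i j hij hj => h1 i j hij (by omega), fun i j hij hi => ?_⟩, ?_⟩
      · exact h2 i j hij (by omega)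
      · exact (h2 a b hab (by simp [a])).asymm

theorem main {n : ℕ} [NeZero n] (m : ℕ) (hm : m < n) : SCard n m (1 % n) = CVP n (m + 1) := by
  induction m with
  | zero => rw [← Sbar_zero, main_count (by omega), fold_zero]
  | succ m ih =>
    have h1 := ih (by omega)
    have h2 := Sbar_succ (n := n) m
    rw [main_count (by omega), fold_succ hm, h1] at h2
    exact (Nat.add_right_cancel h2).symm
end CV

/-- The number of `(k-1)`-element subsets of `{1,…,n-1}` whose elements sum to
`1` mod `n` equals the number of cyclic V-shaped permutations of `{1,…,n}`
whose minimum is in position `k`. -/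
theorem subset_sum_eq_cyclic_vshaped (n k : ℕ) (hn : 1 ≤ n) (hk1 : 1 ≤ k) (hkn : k ≤ n) :
    SCard n (k - 1) (1 % n) =
      Nat.card {σ : Equiv.Perm (Fin n) // IsCyclicPerm n σ ∧ IsVShapedAt n k σ} := by
  have : NeZero n := ⟨by omega⟩
  have h := CV.main (n := n) (k - 1) (by omega)
  rw [Nat.sub_add_cancel hk1] at h
  classical
  rw [h, CV.CVP, Nat.card_eq_fintype_card, Fintype.card_subtype]
end

section
/- If n or k is odd (with 0 ≤ k ≤ n, 0 ≤ r < n), then the number of k-element subsets of {1,…,n} whose elements sum to r mod n equals the number of binary necklaces of length n with k ones whose co-period divides r. -/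
open Finset

open Polynomial in
theorem nk_prod_root (d : ℕ) (hd : 0 < d) (ζ : ℂ) (hζ : IsPrimitiveRoot ζ d) :
    ∏ a ∈ range d, (1 + C (ζ ^ a) * X : ℂ[X]) = 1 - (-X) ^ d := by
  have hp : IsPrimitiveRoot (C ζ : ℂ[X]) d := hζ.map_of_injective C_injective
  have h := hp.pow_sub_pow_eq_prod_sub_mul (1 : ℂ[X]) (-X) hd
  rw [one_pow] at h
  rw [h]
  refine Finset.prod_bij (fun a _ => C ζ ^ a) ?_ ?_ ?_ ?_
  · intro a _
    rw [mem_nthRootsFinset hd, ← pow_mul, mul_comm, pow_mul, hp.pow_eq_one, one_pow]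
  · intro a ha b hb hab
    exact hp.pow_inj (mem_range.1 ha) (mem_range.1 hb) hab
  · intro b hb
    rw [mem_nthRootsFinset hd] at hb
    have : NeZero d := ⟨hd.ne'⟩
    obtain ⟨i, hi, h⟩ := hp.eq_pow_of_pow_eq_one hb
    exact ⟨i, mem_range.2 hi, h⟩
  · intro a _
    simp

open Polynomial in
theorem nk_prod_root_mul (d m : ℕ) (hd : 0 < d) (ζ : ℂ) (hζ : IsPrimitiveRoot ζ d) :
    ∏ a ∈ range (d * m), (1 + C (ζ ^ a) * X : ℂ[X]) = (1 - (-X) ^ d) ^ m := by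
  induction m with
  | zero => simp
  | succ m ih =>
    rw [mul_add, mul_one, prod_range_add, ih, pow_succ, ← nk_prod_root d hd ζ hζ]
    congr 1
    refine prod_congr rfl fun a _ => ?_
    rw [pow_add, pow_mul, hζ.pow_eq_one, one_pow, one_mul]

/-- number of ones as a sum -/
def nkCnt {ι : Type*} [Fintype ι] (w : ι → Bool) : ℕ := ∑ a, if w a = true then 1 else 0

def nkTot {n : ℕ} [NeZero n] (w : ZMod n → Bool) : ZMod n := ∑ a, if w a = true then a else 0

theorem nk_onesCount {n : ℕ} [NeZero n] (w : ZMod n → Bool) : onesCount n w = nkCnt w := by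
  rw [onesCount, nkCnt, Nat.card_eq_fintype_card, Fintype.card_subtype, Finset.card_filter]

theorem nk_prim {n : ℕ} [NeZero n] (t : ZMod n) :
    IsPrimitiveRoot (ZMod.stdAddChar t : ℂ) (addOrderOf t) := by
  rw [IsPrimitiveRoot.iff_def]
  constructor
  · rw [← AddChar.map_nsmul_eq_pow, addOrderOf_nsmul_eq_zero, AddChar.map_zero_eq_one]
  · intro l hl
    rw [← AddChar.map_nsmul_eq_pow, ← AddChar.map_zero_eq_one (ZMod.stdAddChar (N := n))] at hl
    exact addOrderOf_dvd_of_nsmul_eq_zero (ZMod.injective_stdAddChar hl)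

theorem nk_prod_zmod {n : ℕ} [NeZero n] {M : Type*} [CommMonoid M] (f : ZMod n → M) :
    ∏ a, f a = ∏ a ∈ range n, f (a : ZMod n) := by
  symm
  refine Finset.prod_bij (fun a _ => (a : ZMod n)) ?_ ?_ ?_ ?_
  · intros; simp
  · intro a ha b hb hab
    rw [ZMod.natCast_eq_natCast_iff'] at hab
    rwa [Nat.mod_eq_of_lt (mem_range.1 ha), Nat.mod_eq_of_lt (mem_range.1 hb)] at hab
  · intro b _
    exact ⟨b.val, mem_range.2 b.val_lt, by simp⟩
  · intros; rfl

theorem nk_map_sum {n : ℕ} [NeZero n] (ψ : AddChar (ZMod n) ℂ) {ι : Type*} (s : Finset ι)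
    (f : ι → ZMod n) : ψ (∑ i ∈ s, f i) = ∏ i ∈ s, ψ (f i) := by
  classical
  induction s using Finset.induction_on with
  | empty => simp
  | insert a s ha ih => rw [sum_insert ha, prod_insert ha, AddChar.map_add_eq_mul, ih]

open Polynomial in
theorem nk_char_gen {n : ℕ} [NeZero n] (t : ZMod n) (m : ℕ) (hm : n = addOrderOf t * m) :
    ∑ w : ZMod n → Bool, C (ZMod.stdAddChar (t * nkTot w) : ℂ) * X ^ nkCnt w
      = (1 - (-X) ^ addOrderOf t) ^ m := by
  rw [← nk_prod_root_mul _ m (addOrderOf_pos t) _ (nk_prim t), ← hm]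
  have h1 : ∀ a : ℕ, (ZMod.stdAddChar t : ℂ) ^ a = ZMod.stdAddChar (t * (a : ZMod n)) := by
    intro a
    rw [← AddChar.map_nsmul_eq_pow, nsmul_eq_mul, mul_comm]
  simp_rw [h1]
  rw [← nk_prod_zmod (fun a : ZMod n => (1 + C (ZMod.stdAddChar (t * a) : ℂ) * X : ℂ[X]))]
  have h2 : ∀ a : ZMod n, (1 + C (ZMod.stdAddChar (t * a) : ℂ) * X : ℂ[X])
      = ∑ b : Bool, if b = true then C (ZMod.stdAddChar (t * a) : ℂ) * X else 1 := by
    intro a; simp [add_comm]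
  simp_rw [h2]
  rw [Fintype.prod_sum]
  refine sum_congr rfl fun w _ => ?_
  rw [nkTot, nkCnt, mul_sum, nk_map_sum, map_prod, ← Finset.prod_pow_eq_pow_sum,
    ← Finset.prod_mul_distrib]
  refine prod_congr rfl fun a _ => ?_
  by_cases h : w a = true <;> simp [h]

/-- stabilizer subgroup of a word -/
def nkStab {n : ℕ} (w : ZMod n → Bool) : AddSubgroup (ZMod n) where
  carrier := {t | ∀ i, w (i + t) = w i}
  zero_mem' := by simp
  add_mem' := by
    intro a b ha hb i
    rw [← add_assoc, hb, ha]
  neg_mem' := by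
    intro a ha i
    have := ha (i + -a)
    rw [neg_add_cancel_right] at this
    exact this.symm

theorem nk_fixed_zmultiples {n : ℕ} (t : ZMod n) (w : ZMod n → Bool)
    (hw : ∀ i, w (i + t) = w i) (s : ZMod n) (hs : s ∈ AddSubgroup.zmultiples t) (i : ZMod n) :
    w (i + s) = w i := by
  have h : AddSubgroup.zmultiples t ≤ nkStab w := AddSubgroup.zmultiples_le_of_mem hw
  exact h hs i

open Polynomial in
theorem nk_fix_gen {n : ℕ} [NeZero n] (t : ZMod n) (m : ℕ) (hm : n = addOrderOf t * m) :
    ∑ w : ZMod n → Bool with (∀ i, w (i + t) = w i), (X : ℂ[X]) ^ nkCnt w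
      = (1 + X ^ addOrderOf t) ^ m := by
  classical
  let H := AddSubgroup.zmultiples t
  have hH : Nat.card H = addOrderOf t := Nat.card_zmultiples t
  have hQ : Fintype.card (ZMod n ⧸ H) = m := by
    have := AddSubgroup.card_eq_card_quotient_mul_card_addSubgroup H
    rw [hH, Nat.card_zmod, mul_comm] at this
    rw [← Nat.card_eq_fintype_card]
    exact (Nat.eq_of_mul_eq_mul_left (addOrderOf_pos t) (hm.symm.trans this)).symm
  have h1 : (1 + X ^ addOrderOf t : ℂ[X]) ^ m
      = ∏ q : ZMod n ⧸ H, ∑ b : Bool, if b = true then X ^ addOrderOf t else (1 : ℂ[X]) := by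
    simp [hQ, add_comm]
  rw [h1, Fintype.prod_sum]
  symm
  refine Finset.sum_bij (fun v _ => fun a => v (QuotientAddGroup.mk a)) ?_ ?_ ?_ ?_
  · intro v _
    simp only [mem_filter, mem_univ, true_and]
    intro i
    congr 1
    rw [eq_comm, QuotientAddGroup.eq]
    simp [H]
  · intro v _ v' _ h
    funext q
    induction q using QuotientAddGroup.induction_on with
    | H a => exact congrFun h a
  · intro w hw
    simp only [mem_filter, mem_univ, true_and] at hw
    refine ⟨fun q => Quotient.liftOn' q w ?_, mem_univ _, rfl⟩
    intro a b hab
    rw [QuotientAddGroup.leftRel_apply] at hab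
    have := nk_fixed_zmultiples t w hw _ hab a
    rw [← this]; congr 1; abel
  · intro v _
    have : nkCnt (fun a : ZMod n => v (QuotientAddGroup.mk a))
        = ∑ q, addOrderOf t * (if v q = true then 1 else 0) := by
      rw [nkCnt, ← Finset.sum_fiberwise (s := univ)
        (g := fun a : ZMod n => (QuotientAddGroup.mk a : ZMod n ⧸ H))]
      refine sum_congr rfl fun q _ => ?_
      have hc : #{a : ZMod n | (QuotientAddGroup.mk a : ZMod n ⧸ H) = q} = addOrderOf t := by
        induction q using QuotientAddGroup.induction_on with
        | H g =>
          rw [← hH, Nat.card_eq_fintype_card, ← Finset.card_univ]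
          symm
          refine Finset.card_bij (fun h _ => g + (h : ZMod n)) ?_ ?_ ?_
          · intro h _
            simp only [mem_filter, mem_univ, true_and]
            rw [eq_comm, QuotientAddGroup.eq]
            simp
          · intro a _ b _ hab
            exact Subtype.ext (add_left_cancel hab)
          · intro b hb
            simp only [mem_filter, mem_univ, true_and] at hb
            rw [eq_comm, QuotientAddGroup.eq] at hb
            exact ⟨⟨_, hb⟩, mem_univ _, by simp⟩
      rw [← hc, ← smul_eq_mul, ← Finset.sum_const]
      refine sum_congr rfl fun a ha => ?_
      rw [(mem_filter.1 ha).2]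
    rw [this, ← Finset.prod_pow_eq_pow_sum]
    refine prod_congr rfl fun q _ => ?_
    by_cases h : v q = true <;> simp [h]

theorem nk_sum_stab {n : ℕ} [NeZero n] (r : ℕ) (w : ZMod n → Bool) :
    ∑ t : ZMod n with (∀ i, w (i + t) = w i), (ZMod.stdAddChar (t * -(r : ZMod n)) : ℂ)
      = if coPeriod n w ∣ r then (coPeriod n w : ℂ) else 0 := by
  classical
  let H : AddSubgroup (ZMod n) := nkStab w
  have hmem : ∀ t, t ∈ H ↔ ∀ i, w (i + t) = w i := fun t => Iff.rfl
  have hc : coPeriod n w = Nat.card H := rfl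
  let ψ : AddChar H ℂ := (AddChar.mulShift ZMod.stdAddChar (-(r : ZMod n))).compAddMonoidHom H.subtype
  have hψ : ∀ t : H, ψ t = ZMod.stdAddChar ((t : ZMod n) * -(r : ZMod n)) := by
    intro t
    simp [ψ, AddChar.mulShift_apply, mul_comm]
  have hs : ∑ t : ZMod n with (∀ i, w (i + t) = w i), (ZMod.stdAddChar (t * -(r : ZMod n)) : ℂ)
      = ∑ t : H, ψ t := by
    simp_rw [hψ]
    exact Finset.sum_subtype _ (by simp [hmem]) _
  rw [hs, AddChar.sum_eq_ite, hc, Nat.card_eq_fintype_card]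
  refine if_congr ?_ rfl rfl
  rw [← Nat.card_eq_fintype_card, ← IsAddCyclic.exponent_eq_card, AddMonoid.exponent_dvd_iff_forall_nsmul_eq_zero]
  rw [AddChar.eq_zero_iff]
  refine forall_congr' fun t => ?_
  rw [hψ, ← AddChar.map_zero_eq_one (ZMod.stdAddChar (N := n)), ZMod.injective_stdAddChar.eq_iff,
    mul_neg, neg_eq_zero, ← Subtype.coe_inj]
  simp [mul_comm]

/-- comparison of coefficients -/
theorem nk_coeff {n k : ℕ} [NeZero n] (h : Odd n ∨ Odd k) (t : ZMod n) :
    ∑ w : ZMod n → Bool with nkCnt w = k, (ZMod.stdAddChar (t * nkTot w) : ℂ)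
      = #{w : ZMod n → Bool | nkCnt w = k ∧ ∀ i, w (i + t) = w i} := by
  obtain ⟨m, hm⟩ : addOrderOf t ∣ n := by
    simpa using addOrderOf_dvd_natCard t
  have h1 := congrArg (fun p => Polynomial.coeff p k) (nk_char_gen t m hm)
  have h2 := congrArg (fun p => Polynomial.coeff p k) (nk_fix_gen t m hm)
  simp only [Polynomial.finsetSum_coeff, Polynomial.coeff_C_mul, Polynomial.coeff_X_pow] at h1 h2
  have e1 : ∑ w : ZMod n → Bool with nkCnt w = k, (ZMod.stdAddChar (t * nkTot w) : ℂ)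
      = (((1 - (-Polynomial.X) ^ addOrderOf t) ^ m : Polynomial ℂ)).coeff k := by
    rw [← h1, Finset.sum_filter]
    refine sum_congr rfl fun w _ => ?_
    simp [eq_comm]
  have e2 : (#{w : ZMod n → Bool | nkCnt w = k ∧ ∀ i, w (i + t) = w i} : ℂ)
      = (((1 + Polynomial.X ^ addOrderOf t) ^ m : Polynomial ℂ)).coeff k := by
    rw [← h2, Finset.card_filter, Finset.sum_filter]
    push_cast
    refine sum_congr rfl fun w _ => ?_
    by_cases h3 : nkCnt w = k
    · simp [h3]
    · simp [h3, Ne.symm h3]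
  rw [e1, e2]
  rcases Nat.even_or_odd (addOrderOf t) with hd | hd
  · have hk : Odd k := by
      rcases h with h | h
      · exfalso
        rw [hm] at h
        exact (Nat.not_odd_iff_even.2 hd) (Nat.Odd.of_mul_left h)
      · exact h
    have key : ∀ p : Polynomial ℂ, (Polynomial.expand ℂ (addOrderOf t) p).coeff k = 0 := by
      intro p
      rw [Polynomial.coeff_expand (addOrderOf_pos t), if_neg]
      intro hdv
      exact (Nat.not_odd_iff_even.2 (hd.trans_dvd hdv)) hk
    have a1 := key ((1 - Polynomial.X) ^ m)
    have a2 := key ((1 + Polynomial.X) ^ m)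
    simp only [map_pow, map_sub, map_add, map_one, Polynomial.expand_X] at a1 a2
    rw [hd.neg_pow, a1, a2]
  · rw [hd.neg_pow, sub_neg_eq_add]

theorem nk_cast_inj {n : ℕ} {a b : ℕ} (ha : a ∈ Icc 1 n) (hb : b ∈ Icc 1 n)
    (h : (a : ZMod n) = b) : a = b := by
  rw [mem_Icc] at ha hb
  rw [ZMod.natCast_eq_natCast_iff] at h
  refine Nat.ModEq.eq_of_abs_lt h ?_
  rw [abs_lt]; constructor <;> omega

theorem nk_cast_surj {n : ℕ} [NeZero n] (b : ZMod n) : ∃ a ∈ Icc 1 n, (a : ZMod n) = b := by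
  by_cases hb : b = 0
  · exact ⟨n, mem_Icc.2 ⟨NeZero.one_le, le_rfl⟩, by simp [hb]⟩
  · refine ⟨b.val, mem_Icc.2 ⟨?_, b.val_lt.le⟩, by simp⟩
    exact Nat.one_le_iff_ne_zero.2 (by simpa using hb)

theorem nk_sum_Icc {n : ℕ} [NeZero n] {M : Type*} [AddCommMonoid M] (f : ZMod n → M) :
    ∑ x ∈ Icc 1 n, f (x : ZMod n) = ∑ a, f a :=
  Finset.sum_bij (fun a _ => (a : ZMod n)) (fun _ _ => mem_univ _)
    (fun _ ha _ hb h => nk_cast_inj ha hb h)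
    (fun b _ => by obtain ⟨a, h1, h2⟩ := nk_cast_surj b; exact ⟨a, h1, h2⟩) (fun _ _ => rfl)

theorem nk_Sbar {n k r : ℕ} [NeZero n] (hr : r < n) :
    SbarCard n k r = #{w : ZMod n → Bool | nkCnt w = k ∧ nkTot w = r} := by
  classical
  rw [SbarCard]
  symm
  have hcard : ∀ w : ZMod n → Bool, #{x ∈ Icc 1 n | w (x : ℕ) = true} = nkCnt w := by
    intro w
    rw [Finset.card_filter, nk_sum_Icc (fun a => if w a = true then 1 else 0), nkCnt]
  have htot : ∀ w : ZMod n → Bool, ((∑ x ∈ Icc 1 n with w (x : ℕ) = true, x : ℕ) : ZMod n)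
      = nkTot w := by
    intro w
    rw [Nat.cast_sum, Finset.sum_filter, nk_sum_Icc (fun a => if w a = true then a else 0), nkTot]
  have hmod : ∀ s : ℕ, s % n = r ↔ (s : ZMod n) = r := by
    intro s
    rw [ZMod.natCast_eq_natCast_iff', Nat.mod_eq_of_lt hr]
  refine Finset.card_bij (fun w _ => {x ∈ Icc 1 n | w (x : ℕ) = true}) ?_ ?_ ?_
  · intro w hw
    simp only [mem_filter, mem_univ, true_and] at hw
    rw [mem_filter, mem_powerset, hcard, hmod, htot]
    exact ⟨filter_subset _ _, hw⟩
  · intro w _ w' _ h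
    funext a
    obtain ⟨x, hx, rfl⟩ := nk_cast_surj a
    have := Finset.ext_iff.1 h x
    simp only [mem_filter, hx, true_and] at this
    exact Bool.eq_iff_iff.2 this
  · intro A hA
    rw [mem_filter, mem_powerset, hmod] at hA
    obtain ⟨hA, h1, h2⟩ := hA
    have he : {x ∈ Icc 1 n | decide (∃ y ∈ A, (y : ZMod n) = ((x : ℕ) : ZMod n)) = true} = A := by
      ext x
      simp only [mem_filter, decide_eq_true_eq]
      constructor
      · rintro ⟨hx, y, hy, hxy⟩
        rwa [← nk_cast_inj (hA hy) hx hxy]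
      · intro hx
        exact ⟨hA hx, x, hx, rfl⟩
    refine ⟨fun a => decide (∃ y ∈ A, (y : ZMod n) = a), ?_, he⟩
    simp only [mem_filter, mem_univ, true_and]
    rw [← hcard, ← htot, he]
    exact ⟨h1, h2⟩

theorem nk_rot_ones {n : ℕ} (w : ZMod n → Bool) (t : ZMod n) :
    onesCount n (fun i => w (i + t)) = onesCount n w :=
  Nat.card_congr ((Equiv.addRight t).subtypeEquiv (fun _ => Iff.rfl))

theorem nk_rot_coPeriod {n : ℕ} (w : ZMod n → Bool) (t : ZMod n) :
    coPeriod n (fun i => w (i + t)) = coPeriod n w := by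
  refine Nat.card_congr (Equiv.subtypeEquivRight fun s => ?_)
  constructor
  · intro h i
    have := h (i - t)
    simp only [sub_add_cancel] at this
    rw [← this]; congr 1; abel
  · intro h i
    have := h (i + t)
    change w (i + s + t) = w (i + t)
    rw [← this]; congr 1; abel

theorem nk_Nr {n k r : ℕ} [NeZero n] :
    n * NrCard n k r
      = ∑ w : ZMod n → Bool with nkCnt w = k ∧ coPeriod n w ∣ r, coPeriod n w := by
  classical
  let W := {w : ZMod n → Bool // onesCount n w = k ∧ coPeriod n w ∣ r}
  let s : Setoid W := Setoid.comap Subtype.val (rotSetoid n)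
  have h0 : ∑ w : ZMod n → Bool with nkCnt w = k ∧ coPeriod n w ∣ r, coPeriod n w
      = ∑ w : W, coPeriod n w.1 :=
    Finset.sum_subtype _ (by simp [nk_onesCount]) _
  have h1 : NrCard n k r = Fintype.card (Quotient s) := Nat.card_eq_fintype_card
  rw [h0, h1, ← Finset.sum_fiberwise (s := univ) (g := fun w : W => (Quotient.mk s w)),
    mul_comm, ← smul_eq_mul, ← Finset.card_univ, ← Finset.sum_const]
  refine sum_congr rfl fun q _ => ?_
  induction q using Quotient.inductionOn with
  | h w0 =>
    let f : ZMod n → W := fun t => ⟨fun i => w0.1 (i + t), by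
      rw [nk_rot_ones, nk_rot_coPeriod]; exact w0.2⟩
    have hf : ∀ t, Quotient.mk s (f t) = Quotient.mk s w0 := fun t =>
      Quotient.sound ⟨t, fun i => rfl⟩
    have h2 := Finset.card_eq_sum_card_fiberwise (f := f) (s := univ)
      (t := {w : W | Quotient.mk s w = Quotient.mk s w0}) (by
        intro t _
        simpa using hf t)
    rw [Finset.card_univ, ZMod.card] at h2
    refine h2.trans (sum_congr rfl fun w hw => ?_)
    obtain ⟨t0, ht0⟩ : rotRel n w.1 w0.1 := Quotient.exact (mem_filter.1 hw).2
    rw [coPeriod, Nat.card_eq_fintype_card, Fintype.card_subtype]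
    symm
    refine Finset.card_bij (fun t _ => t + t0) ?_ ?_ ?_
    · intro t ht
      simp only [mem_filter, mem_univ, true_and] at ht ⊢
      refine Subtype.ext (funext fun i => ?_)
      change w0.1 (i + (t + t0)) = w.1 i
      rw [← ht i, ht0, add_assoc]
    · intro a _ b _ hab
      exact add_right_cancel hab
    · intro b hb
      simp only [mem_filter, mem_univ, true_and] at hb
      refine ⟨b - t0, ?_, sub_add_cancel _ _⟩
      simp only [mem_filter, mem_univ, true_and]
      intro i
      rw [ht0, add_assoc, sub_add_cancel, ← hb]

/-- If `n` or `k` is odd, then `|S̄ᵣ(n,k)| = |Nᵣ(n,k)|`. -/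
theorem Sbar_eq_Nr_of_odd (n k r : ℕ) (h : Odd n ∨ Odd k) (hk : k ≤ n) (hr : r < n) :
    SbarCard n k r = NrCard n k r := by
  classical
  have : NeZero n := ⟨by omega⟩
  have hn : 0 < n := by omega
  refine Nat.eq_of_mul_eq_mul_left hn ?_
  rw [nk_Nr, nk_Sbar hr]
  have key : ((n * #{w : ZMod n → Bool | nkCnt w = k ∧ nkTot w = r} : ℕ) : ℂ)
      = ((∑ w : ZMod n → Bool with nkCnt w = k ∧ coPeriod n w ∣ r, coPeriod n w : ℕ) : ℂ) := by
    calc ((n * #{w : ZMod n → Bool | nkCnt w = k ∧ nkTot w = r} : ℕ) : ℂ)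
        = ∑ w : ZMod n → Bool with nkCnt w = k,
            ∑ t : ZMod n, (ZMod.stdAddChar (t * (nkTot w - (r : ZMod n))) : ℂ) := by
          simp_rw [AddChar.sum_mulShift _ (ZMod.isPrimitive_stdAddChar n), sub_eq_zero, ZMod.card]
          rw [← Finset.filter_filter, Finset.card_filter, Nat.cast_mul, Nat.cast_sum,
            Finset.mul_sum]
          refine sum_congr rfl fun w _ => ?_
          split_ifs <;> simp
      _ = ∑ t : ZMod n, ZMod.stdAddChar (t * -(r : ZMod n)) *
            ∑ w : ZMod n → Bool with nkCnt w = k, (ZMod.stdAddChar (t * nkTot w) : ℂ) := by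
          rw [Finset.sum_comm]
          refine sum_congr rfl fun t _ => ?_
          rw [Finset.mul_sum]
          refine sum_congr rfl fun w _ => ?_
          rw [← AddChar.map_add_eq_mul]
          congr 1; ring
      _ = ∑ t : ZMod n, ∑ w : ZMod n → Bool with nkCnt w = k,
            if (∀ i, w (i + t) = w i) then (ZMod.stdAddChar (t * -(r : ZMod n)) : ℂ) else 0 := by
          refine sum_congr rfl fun t _ => ?_
          rw [nk_coeff h, ← Finset.sum_filter, Finset.filter_filter, Finset.sum_const,
            nsmul_eq_mul, mul_comm]
      _ = ∑ w : ZMod n → Bool with nkCnt w = k,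
            if coPeriod n w ∣ r then (coPeriod n w : ℂ) else 0 := by
          rw [Finset.sum_comm]
          refine sum_congr rfl fun w _ => ?_
          rw [← nk_sum_stab, Finset.sum_filter]
      _ = _ := by
          rw [← Finset.sum_filter, Finset.filter_filter, Nat.cast_sum]
  exact_mod_cast key
end

section
/- Let n and k both be even with 0 < k < n, let m = ν₂(k) be the 2-adic valuation of k, and suppose ν₂(n) ≥ m and ν₂(k) − ν₂(r) ≤ 1 (where ν₂(0)=∞). Then |N_r(n,k)| − |S̄_r(n,k)| = ε · |N_r(n/2^m, k/2^m)|, where ε = −1 if ν₂(r) = m−1 and ε = +1 otherwise. -/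
open Finset

def fA (r : ℕ) : ArithmeticFunction ℤ := ⟨fun j => if j ∣ r then (j : ℤ) else 0, by simp⟩

theorem fA_apply (r j : ℕ) : fA r j = if j ∣ r then (j : ℤ) else 0 := rfl

theorem fA_mult (r : ℕ) : (fA r).IsMultiplicative := by
  refine ⟨by simp [fA_apply], ?_⟩
  intro a b hab
  simp only [fA_apply]
  have : a * b ∣ r ↔ a ∣ r ∧ b ∣ r :=
    ⟨fun h => ⟨(Dvd.intro _ rfl).trans h, (Dvd.intro_left _ rfl).trans h⟩,
      fun h => hab.mul_dvd_of_dvd_of_dvd h.1 h.2⟩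
  by_cases h1 : a ∣ r <;> by_cases h2 : b ∣ r <;> simp [this, h1, h2]

def cA (r : ℕ) : ArithmeticFunction ℤ := fA r * ArithmeticFunction.moebius

theorem cA_mult (r : ℕ) : (cA r).IsMultiplicative :=
  (fA_mult r).mul ArithmeticFunction.isMultiplicative_moebius

theorem cA_sum (r j : ℕ) : ∑ D ∈ j.divisors, cA r D = fA r j := by
  have : (cA r * (ArithmeticFunction.zeta : ArithmeticFunction ℤ)) = fA r := by
    rw [cA, mul_assoc, ArithmeticFunction.moebius_mul_coe_zeta, mul_one]
  rw [← ArithmeticFunction.coe_mul_zeta_apply, this]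

theorem cA_two (r m : ℕ) : cA r (2 ^ (m + 1)) = fA r (2 ^ (m + 1)) - fA r (2 ^ m) := by
  have h1 := cA_sum r (2 ^ (m + 1))
  have h2 := cA_sum r (2 ^ m)
  rw [Nat.sum_divisors_prime_pow Nat.prime_two] at h1 h2
  rw [Finset.sum_range_succ] at h1
  linarith

theorem final_step (n k r : ℕ) (hk0 : 0 < k) (hkn : k < n)
    (hke : Even k)
    (hmn : padicValNat 2 k ≤ padicValNat 2 n)
    (hcond : r = 0 ∨ padicValNat 2 k ≤ padicValNat 2 r + 1) (N S N' : ℤ)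
    (hN : (n : ℤ) * N = ∑ D ∈ n.divisors, cA r D * (if D ∣ k then ((n / D).choose (k / D) : ℤ) else 0))
    (hS : (n : ℤ) * S = ∑ D ∈ n.divisors, cA r D *
      (if D ∣ k then (-1) ^ (k + k / D) * ((n / D).choose (k / D) : ℤ) else 0))
    (hN' : ((n / 2 ^ padicValNat 2 k : ℕ) : ℤ) * N' = ∑ D ∈ (n / 2 ^ padicValNat 2 k).divisors, cA r D *
      (if D ∣ k / 2 ^ padicValNat 2 k then
        ((n / 2 ^ padicValNat 2 k / D).choose (k / 2 ^ padicValNat 2 k / D) : ℤ) else 0)) :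
    N - S = (if r ≠ 0 ∧ padicValNat 2 r = padicValNat 2 k - 1 then (-1 : ℤ) else 1) * N' := by
  set m := padicValNat 2 k with hm
  have hn0 : n ≠ 0 := by omega
  have hm1 : 1 ≤ m := one_le_padicValNat_of_dvd hk0.ne' hke.two_dvd
  obtain ⟨a, ha⟩ : ∃ a, m = a + 1 := ⟨m - 1, by omega⟩
  obtain ⟨k', hk'⟩ : 2 ^ m ∣ k := pow_padicValNat_dvd
  obtain ⟨n', hn'⟩ : 2 ^ m ∣ n := (pow_dvd_pow 2 hmn).trans pow_padicValNat_dvd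
  have hpos : 0 < 2 ^ m := by positivity
  have hkd : k / 2 ^ m = k' := by rw [hk']; exact Nat.mul_div_cancel_left _ hpos
  have hnd : n / 2 ^ m = n' := by rw [hn']; exact Nat.mul_div_cancel_left _ hpos
  rw [hkd, hnd] at hN'
  have hk'odd : Odd k' := by
    rw [← Nat.not_even_iff_odd]
    intro h
    obtain ⟨l, hl⟩ := h.two_dvd
    have : 2 ^ (m + 1) ∣ k := ⟨l, by rw [hk', hl]; ring⟩
    rw [padicValNat_dvd_iff_le hk0.ne'] at this
    omega
  have hc2 : 2 * cA r (2 ^ m) = (if r ≠ 0 ∧ padicValNat 2 r = m - 1 then (-1 : ℤ) else 1) * 2 ^ m := by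
    rw [ha, cA_two, fA_apply, fA_apply]
    have h1 : 2 ^ a ∣ r := by
      rcases hcond with h | h
      · simp [h]
      · exact (pow_dvd_pow 2 (by omega)).trans pow_padicValNat_dvd
    rw [if_pos h1]
    split_ifs with h2 h3 h3
    · rw [padicValNat_dvd_iff_le h3.1] at h2; omega
    · push_cast; ring
    · push_cast; ring
    · exfalso
      rcases eq_or_ne r 0 with h0 | h0
      · exact h2 (by simp [h0])
      · rw [padicValNat_dvd_iff_le h0] at h2
        have := hcond.resolve_left h0
        exact h3 ⟨h0, by omega⟩
  have hn'0 : n' ≠ 0 := by rintro rfl; simp at hn'; omega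
  have hk'0 : k' ≠ 0 := by rintro rfl; simp at hk'; omega
  have key : (n : ℤ) * (N - S) = 2 * cA r (2 ^ m) * (n' * N') := by
    rw [mul_sub, hN, hS, hN', ← Finset.sum_sub_distrib, Finset.mul_sum]
    symm
    rw [← Finset.sum_filter_of_ne (p := fun D => D ∣ k')
      (s := n'.divisors), ← Finset.sum_filter_of_ne (p := fun D => D ∣ k ∧ Odd (k / D))
      (s := n.divisors)]
    · refine Finset.sum_nbij (fun D => 2 ^ m * D) ?_ ?_ ?_ ?_
      · intro D hD
        simp only [Finset.mem_filter, Nat.mem_divisors] at hD ⊢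
        refine ⟨⟨?_, hn0⟩, ?_, ?_⟩
        · rw [hn']; exact mul_dvd_mul_left _ hD.1.1
        · rw [hk']; exact mul_dvd_mul_left _ hD.2
        · rw [hk', Nat.mul_div_mul_left _ _ hpos]
          exact hk'odd.of_dvd_nat (Nat.div_dvd_of_dvd hD.2)
      · intro x _ y _ h
        exact Nat.eq_of_mul_eq_mul_left hpos h
      · intro D hD
        simp only [Finset.coe_filter, Set.mem_ofPred_eq, Nat.mem_divisors, Set.mem_image] at hD ⊢
        obtain ⟨⟨h1, _⟩, ⟨q, hq⟩, h3⟩ := hD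
        have hD0 : 0 < D := Nat.pos_of_ne_zero (by rintro rfl; simp at h1; omega)
        have hqo : Odd q := by rwa [hq, Nat.mul_div_cancel_left _ hD0] at h3
        have hdv : 2 ^ m ∣ D := by
          have : 2 ^ m ∣ D * q := ⟨k', by rw [← hq, hk']⟩
          exact (Nat.Coprime.pow_left m (Nat.coprime_two_left.2 hqo)).dvd_of_dvd_mul_right this
        obtain ⟨E, rfl⟩ := hdv
        refine ⟨E, ⟨⟨?_, hn'0⟩, ?_⟩, rfl⟩
        · rw [hn'] at h1; exact Nat.dvd_of_mul_dvd_mul_left hpos h1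
        · have : 2 ^ m * E ∣ 2 ^ m * k' := ⟨q, by rw [← hq, hk']⟩
          exact Nat.dvd_of_mul_dvd_mul_left hpos this
      · intro D hD
        simp only [Finset.mem_filter, Nat.mem_divisors] at hD
        have hDo : Odd D := hk'odd.of_dvd_nat hD.2
        have hco : (2 ^ m).Coprime D := Nat.Coprime.pow_left m (Nat.coprime_two_left.2 hDo)
        have e1 : n / (2 ^ m * D) = n' / D := by rw [hn', Nat.mul_div_mul_left _ _ hpos]
        have e2 : k / (2 ^ m * D) = k' / D := by rw [hk', Nat.mul_div_mul_left _ _ hpos]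
        have e3 : 2 ^ m * D ∣ k := by rw [hk']; exact mul_dvd_mul_left _ hD.2
        have e4 : Odd (k + k' / D) :=
          hke.add_odd (hk'odd.of_dvd_nat (Nat.div_dvd_of_dvd hD.2))
        rw [(cA_mult r).map_mul_of_coprime hco, if_pos hD.2, if_pos e3, if_pos e3, e1, e2, e4.neg_one_pow]
        ring
    · intro D hD hne
      by_cases h : D ∣ k
      · refine ⟨h, ?_⟩
        by_contra h2
        rw [Nat.not_odd_iff_even] at h2
        apply hne
        rw [if_pos h, if_pos h, (hke.add h2).neg_one_pow]; ring
      · simp [h] at hne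
    · intro D hD hne
      by_contra h
      simp [h] at hne
  rw [hc2, hn'] at key
  have hz : ((2 ^ m * n' : ℕ) : ℤ) ≠ 0 := by rw [← hn']; exact_mod_cast hn0
  apply mul_left_cancel₀ hz
  rw [key]
  push_cast
  ring

theorem onesCount_shift (n : ℕ) (w : ZMod n → Bool) (t : ZMod n) :
    onesCount n (fun i => w (i + t)) = onesCount n w :=
  Nat.card_congr ((Equiv.addRight t).subtypeEquiv (fun _ => Iff.rfl))

theorem coPeriod_shift (n : ℕ) (w : ZMod n → Bool) (t : ZMod n) :
    coPeriod n (fun i => w (i + t)) = coPeriod n w := by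
  refine Nat.card_congr (Equiv.subtypeEquivRight fun s => ?_)
  constructor
  · intro h i
    have := h (i - t)
    simp only [sub_add_cancel] at this
    rw [← this]; congr 1; ring
  · intro h i
    change w (i + s + t) = w (i + t)
    rw [← h (i + t)]; congr 1; ring

@[reducible]
def rotAct (n k r : ℕ) :
    AddAction (ZMod n) {w : ZMod n → Bool // onesCount n w = k ∧ coPeriod n w ∣ r} where
  vadd t w := ⟨fun i => w.1 (i + t), by rw [onesCount_shift, coPeriod_shift]; exact w.2⟩
  zero_vadd w := by
    apply Subtype.ext; funext i
    change w.1 (i + 0) = w.1 i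
    rw [add_zero]
  add_vadd s t w := by
    apply Subtype.ext; funext i
    change w.1 (i + (s + t)) = w.1 (i + s + t)
    rw [add_assoc]

theorem burn (n k r : ℕ) [NeZero n] :
    (n : ℤ) * NrCard n k r =
      ∑ w : ZMod n → Bool, if onesCount n w = k then fA r (coPeriod n w) else 0 := by
  classical
  let := rotAct n k r
  have h1 := Nat.card_congr (AddAction.sigmaFixedByEquivOrbitsProdAddGroup (ZMod n)
    {w : ZMod n → Bool // onesCount n w = k ∧ coPeriod n w ∣ r})
  have h2 : AddAction.orbitRel (ZMod n) {w : ZMod n → Bool // onesCount n w = k ∧ coPeriod n w ∣ r}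
      = Setoid.comap Subtype.val (rotSetoid n) := by
    ext a b
    change (∃ t : ZMod n, t +ᵥ b = a) ↔ ∃ t : ZMod n, ∀ i, a.1 i = b.1 (i + t)
    refine exists_congr fun t => ?_
    rw [Subtype.ext_iff, funext_iff]
    exact forall_congr' fun i => eq_comm
  rw [Nat.card_prod, Nat.card_zmod] at h1
  have h3 : NrCard n k r = Nat.card (Quotient (AddAction.orbitRel (ZMod n)
      {w : ZMod n → Bool // onesCount n w = k ∧ coPeriod n w ∣ r})) := by
    rw [h2]; rfl
  rw [← h3] at h1
  have e : (Σ t : ZMod n, AddAction.fixedBy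
      {w : ZMod n → Bool // onesCount n w = k ∧ coPeriod n w ∣ r} t) ≃
      Σ w : {w : ZMod n → Bool // onesCount n w = k ∧ coPeriod n w ∣ r},
        {t : ZMod n // ∀ i, w.1 (i + t) = w.1 i} :=
    { toFun := fun x => ⟨x.2.1, x.1, fun i => congrFun (congrArg Subtype.val x.2.2) i⟩
      invFun := fun x => ⟨x.2.1, x.1, Subtype.ext (funext x.2.2)⟩
      left_inv := fun x => rfl
      right_inv := fun x => rfl }
  rw [Nat.card_congr e, Nat.card_sigma] at h1
  rw [← Nat.cast_mul, mul_comm n, ← h1]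
  push_cast
  rw [← Finset.sum_filter]
  simp only [fA_apply]
  rw [← Finset.sum_filter, Finset.filter_filter]
  rw [Finset.sum_subtype (p := fun w => onesCount n w = k ∧ coPeriod n w ∣ r)]
  · rfl
  · simp

def stabG (n : ℕ) (w : ZMod n → Bool) : AddSubgroup (ZMod n) where
  carrier := {t | ∀ i, w (i + t) = w i}
  zero_mem' := by intro i; rw [add_zero]
  add_mem' := by
    intro a b ha hb i
    rw [← add_assoc, hb, ha]
  neg_mem' := by
    intro a ha i
    have := ha (i + -a)
    rw [neg_add_cancel_right] at this
    exact this.symm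

theorem coPeriod_eq (n : ℕ) (w : ZMod n → Bool) : coPeriod n w = Nat.card (stabG n w) := rfl

theorem coPeriod_dvd (n : ℕ) (w : ZMod n → Bool) : coPeriod n w ∣ n := by
  have := AddSubgroup.card_addSubgroup_dvd_card (stabG n w)
  rwa [Nat.card_zmod] at this

theorem dvd_coPeriod_iff (n e D : ℕ) [NeZero n] (h : n = e * D) (w : ZMod n → Bool) :
    D ∣ coPeriod n w ↔ ∀ i, w (i + (e : ZMod n)) = w i := by
  classical
  have hn0 : n ≠ 0 := NeZero.ne n
  have hD0 : D ≠ 0 := by rintro rfl; simp at h; exact hn0 h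
  have he0 : e ≠ 0 := by rintro rfl; simp at h; exact hn0 h
  change D ∣ coPeriod n w ↔ (e : ZMod n) ∈ stabG n w
  rw [coPeriod_eq]
  constructor
  · intro hd
    set c := Nat.card (stabG n w) with hc
    have hc0 : 0 < c := Nat.card_pos
    have hle := IsAddCyclic.card_nsmul_eq_zero_le (α := ZMod n) hc0
    have hsub : (Finset.univ.filter (· ∈ stabG n w)) ⊆
        (Finset.univ.filter fun a : ZMod n => c • a = 0) := by
      intro a ha
      simp only [Finset.mem_filter, Finset.mem_univ, true_and] at ha ⊢
      have := card_nsmul_eq_zero' (G := stabG n w) (x := ⟨a, ha⟩)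
      exact congrArg Subtype.val this
    have hcard : (Finset.univ.filter (· ∈ stabG n w)).card = c := by
      rw [hc, Nat.card_eq_fintype_card, Fintype.card_subtype]
    have heq := Finset.eq_of_subset_of_card_le hsub (by rw [hcard]; exact hle)
    have : (e : ZMod n) ∈ Finset.univ.filter (· ∈ stabG n w) := by
      rw [heq]
      simp only [Finset.mem_filter, Finset.mem_univ, true_and]
      rw [nsmul_eq_mul, ← Nat.cast_mul, ZMod.natCast_eq_zero_iff, h, mul_comm]
      exact mul_dvd_mul_right hd e
    simpa using this
  · intro he
    have := addOrderOf_dvd_natCard (⟨(e : ZMod n), he⟩ : stabG n w)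
    rw [AddSubgroup.addOrderOf_mk, ZMod.addOrderOf_coe e hn0] at this
    have h2 : n / n.gcd e = D := by
      rw [h, Nat.gcd_mul_right_left, Nat.mul_div_cancel_left _ (Nat.pos_of_ne_zero he0)]
    rwa [h2] at this

theorem count_words (e j : ℕ) [NeZero e] :
    Nat.card {v : ZMod e → Bool // onesCount e v = j} = e.choose j := by
  classical
  have : Nat.card {s : Finset (ZMod e) // s.card = j} = e.choose j := by
    rw [Nat.card_eq_fintype_card, Fintype.card_finset_len, ZMod.card]
  rw [← this]
  refine Nat.card_congr
    { toFun := fun v => ⟨Finset.univ.filter (fun i => v.1 i = true), ?_⟩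
      invFun := fun s => ⟨fun i => decide (i ∈ s.1), ?_⟩
      left_inv := ?_
      right_inv := ?_ }
  · refine Eq.trans ?_ v.2
    rw [onesCount, Nat.card_eq_fintype_card, Fintype.card_subtype]
  · refine Eq.trans ?_ s.2
    rw [onesCount, Nat.card_eq_fintype_card, Fintype.card_subtype]
    simp
  · intro v; apply Subtype.ext; funext i; simp
  · intro s; apply Subtype.ext; ext i; simp

theorem onesCount_lift (n e D : ℕ) [NeZero n] (h : n = e * D) (hd : e ∣ n) (v : ZMod e → Bool) :
    onesCount n (fun i => v (ZMod.castHom hd (ZMod e) i)) = D * onesCount e v := by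
  classical
  have hn0 : n ≠ 0 := NeZero.ne n
  have he0 : e ≠ 0 := by rintro rfl; simp at h; exact hn0 h
  have : NeZero e := ⟨he0⟩
  let φ := (ZMod.castHom hd (ZMod e)).toAddMonoidHom
  have hsurj : Function.Surjective φ := ZMod.castHom_surjective hd
  have hker : Nat.card φ.ker = D := by
    have h1 := AddSubgroup.card_eq_card_quotient_mul_card_addSubgroup φ.ker
    rw [Nat.card_congr (QuotientAddGroup.quotientKerEquivOfSurjective φ hsurj).toEquiv,
      Nat.card_zmod, Nat.card_zmod] at h1
    exact (Nat.eq_of_mul_eq_mul_left (Nat.pos_of_ne_zero he0) (h1.symm.trans h))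
  have e1 : {i : ZMod n // v (φ i) = true} ≃ Σ y : {y : ZMod e // v y = true}, {i : ZMod n // φ i = y.1} :=
    { toFun := fun x => ⟨⟨φ x.1, x.2⟩, x.1, rfl⟩
      invFun := fun x => ⟨x.2.1, by rw [x.2.2]; exact x.1.2⟩
      left_inv := fun x => rfl
      right_inv := by
        rintro ⟨⟨y, hy⟩, ⟨i, hi⟩⟩
        change φ i = y at hi
        subst y; rfl }
  change Nat.card {i : ZMod n // v (φ i) = true} = _
  rw [Nat.card_congr e1, Nat.card_sigma]
  have : ∀ y : {y : ZMod e // v y = true}, Nat.card {i : ZMod n // φ i = y.1} = D := by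
    rintro ⟨y, hy⟩
    obtain ⟨x, rfl⟩ := hsurj y
    rw [← hker]
    refine Nat.card_congr ((Equiv.subRight x).subtypeEquiv fun i => ?_)
    simp [AddMonoidHom.mem_ker, sub_eq_zero]
  simp only [this]
  rw [Finset.sum_const, smul_eq_mul, mul_comm, onesCount, Nat.card_eq_fintype_card]
  rfl

theorem periodic_lift (n e : ℕ) [NeZero n] (hd : e ∣ n) (w : ZMod n → Bool)
    (hw : ∀ i, w (i + (e : ZMod n)) = w i) (a b : ZMod n)
    (hab : ZMod.castHom hd (ZMod e) a = ZMod.castHom hd (ZMod e) b) : w a = w b := by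
  have key : ∀ c : ℕ, ∀ i, w (i + ((e * c : ℕ) : ZMod n)) = w i := by
    intro c
    induction c with
    | zero => intro i; simp
    | succ c ih =>
      intro i
      rw [Nat.mul_succ, Nat.cast_add, ← add_assoc, hw, ih]
  have h0 : ZMod.castHom hd (ZMod e) (a - b) = 0 := by rw [map_sub, hab, sub_self]
  obtain ⟨z, hz⟩ : ∃ z : ℕ, (z : ZMod n) = a - b := ⟨(a - b).val, ZMod.natCast_zmod_val _⟩
  rw [← hz, map_natCast, ZMod.natCast_eq_zero_iff] at h0
  obtain ⟨c, rfl⟩ := h0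
  have := key c b
  rw [hz, add_sub_cancel] at this
  exact this

theorem count_periodic (n e D k : ℕ) [NeZero n] (h : n = e * D) :
    Nat.card {w : ZMod n → Bool // onesCount n w = k ∧ ∀ i, w (i + (e : ZMod n)) = w i} =
      if D ∣ k then e.choose (k / D) else 0 := by
  classical
  have hn0 : n ≠ 0 := NeZero.ne n
  have he0 : e ≠ 0 := by rintro rfl; simp at h; exact hn0 h
  have hD0 : D ≠ 0 := by rintro rfl; simp at h; exact hn0 h
  have : NeZero e := ⟨he0⟩
  have hd : e ∣ n := ⟨D, h⟩
  have hsurj : Function.Surjective (ZMod.castHom hd (ZMod e)) := ZMod.castHom_surjective hd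
  have e1 : {v : ZMod e → Bool // D * onesCount e v = k} ≃
      {w : ZMod n → Bool // onesCount n w = k ∧ ∀ i, w (i + (e : ZMod n)) = w i} := by
    refine Equiv.ofBijective (fun v => ⟨fun i => v.1 (ZMod.castHom hd (ZMod e) i), ?_, ?_⟩) ⟨?_, ?_⟩
    · rw [onesCount_lift n e D h hd, v.2]
    · intro i
      change v.1 (ZMod.castHom hd (ZMod e) (i + e)) = v.1 (ZMod.castHom hd (ZMod e) i)
      rw [map_add, map_natCast]; simp
    · intro v v' hv
      apply Subtype.ext; funext y
      obtain ⟨x, rfl⟩ := hsurj y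
      exact congrFun (congrArg Subtype.val hv) x
    · rintro ⟨w, hw1, hw2⟩
      have hlift : (fun i => w (Function.surjInv hsurj (ZMod.castHom hd (ZMod e) i))) = w := by
        funext i
        exact periodic_lift n e hd w hw2 _ _ (Function.surjInv_eq hsurj _)
      refine ⟨⟨fun y => w (Function.surjInv hsurj y), ?_⟩, ?_⟩
      · rw [← onesCount_lift n e D h hd, hlift, hw1]
      · exact Subtype.ext hlift
  rw [← Nat.card_congr e1]
  split_ifs with hk
  · obtain ⟨q, rfl⟩ := hk
    rw [Nat.mul_div_cancel_left _ (Nat.pos_of_ne_zero hD0), ← count_words]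
    refine Nat.card_congr (Equiv.subtypeEquivRight fun v => ?_)
    exact ⟨fun h => Nat.eq_of_mul_eq_mul_left (Nat.pos_of_ne_zero hD0) h, fun h => by rw [h]⟩
  · have : IsEmpty {v : ZMod e → Bool // D * onesCount e v = k} :=
      ⟨fun v => hk ⟨_, v.2.symm⟩⟩
    exact Nat.card_of_isEmpty

theorem Nr_formula (n k r : ℕ) (hn : n ≠ 0) : (n : ℤ) * NrCard n k r =
    ∑ D ∈ n.divisors, cA r D * (if D ∣ k then ((n / D).choose (k / D) : ℤ) else 0) := by
  classical
  have : NeZero n := ⟨hn⟩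
  rw [burn]
  have h1 : ∀ w : ZMod n → Bool, (if onesCount n w = k then fA r (coPeriod n w) else 0) =
      ∑ D ∈ n.divisors, cA r D * (if onesCount n w = k ∧ D ∣ coPeriod n w then 1 else 0) := by
    intro w
    split_ifs with hw
    · rw [← cA_sum]
      simp only [hw, true_and, mul_ite, mul_one, mul_zero]
      rw [← Finset.sum_filter]
      congr 1
      ext D
      simp only [Nat.mem_divisors, Finset.mem_filter]
      have hd := coPeriod_dvd n w
      constructor
      · rintro ⟨a, b⟩; exact ⟨⟨a.trans hd, hn⟩, a⟩
      · rintro ⟨a, b⟩; exact ⟨b, fun h0 => by rw [h0, zero_dvd_iff] at hd; exact hn hd⟩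
    · simp [hw]
  simp only [h1]
  rw [Finset.sum_comm]
  refine Finset.sum_congr rfl fun D hD => ?_
  rw [← Finset.mul_sum]
  congr 1
  obtain ⟨e, he⟩ := (Nat.mem_divisors.1 hD).1
  have hD0 : 0 < D := Nat.pos_of_mem_divisors hD
  have he' : n = e * D := by rw [he, mul_comm]
  have hq : n / D = e := by rw [he, Nat.mul_div_cancel_left _ hD0]
  have h2 := count_periodic n e D k he'
  rw [hq, Finset.sum_boole]
  have h3 : (if D ∣ k then ((e.choose (k / D) : ℕ) : ℤ) else 0) =
    ((if D ∣ k then e.choose (k / D) else 0 : ℕ) : ℤ) := by split_ifs <;> simp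
  rw [h3, ← h2, Nat.card_eq_fintype_card, Fintype.card_subtype]
  simp only [dvd_coPeriod_iff n e D he']

open Polynomial in
theorem prod_roots (ω : ℂ) (D : ℕ) (hD : 0 < D) (hω : IsPrimitiveRoot ω D) (x y : ℂ[X]) :
    ∏ i ∈ Finset.range D, (x - C (ω ^ i) * y) = x ^ D - y ^ D := by
  have hω' : IsPrimitiveRoot (C ω : ℂ[X]) D := hω.map_of_injective C_injective
  rw [hω'.pow_sub_pow_eq_prod_sub_mul x y hD]
  refine Finset.prod_nbij (fun i => (C ω : ℂ[X]) ^ i) ?_ ?_ ?_ ?_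
  · intro i _
    rw [Polynomial.mem_nthRootsFinset hD, ← pow_mul, mul_comm, pow_mul, hω'.pow_eq_one, one_pow]
  · intro i hi j hj h
    exact hω'.pow_inj (by simpa using hi) (by simpa using hj) h
  · intro z hz
    have hz' : z ^ D = 1 := (Polynomial.mem_nthRootsFinset hD 1).1 hz
    have : NeZero D := ⟨hD.ne'⟩
    obtain ⟨i, hi, rfl⟩ := hω'.eq_pow_of_pow_eq_one hz'
    exact ⟨i, by simpa using hi, rfl⟩
  · intro i _
    simp

open Polynomial in
theorem prod_full (ω : ℂ) (e D : ℕ) (hD : 0 < D) (hω : IsPrimitiveRoot ω D) :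
    ∏ a ∈ Finset.Icc 1 (e * D), (1 + C (ω ^ a) * (X : ℂ[X])) = (1 - (-X) ^ D) ^ e := by
  have h0 : ∏ i ∈ Finset.range D, (1 + C (ω ^ (i + 1)) * (X : ℂ[X])) = 1 - (-X) ^ D := by
    have h := prod_roots ω D hD hω 1 (-(C ω * X))
    have e1 : (-(C ω * X) : ℂ[X]) ^ D = (-X) ^ D := by
      rw [← mul_neg, mul_pow, ← C_pow, hω.pow_eq_one, C_1, one_mul]
    rw [e1, one_pow] at h
    rw [← h]
    refine Finset.prod_congr rfl fun i _ => ?_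
    rw [pow_succ, C_mul]; ring
  have h1 : ∀ N : ℕ, ∏ a ∈ Finset.Icc 1 N, (1 + C (ω ^ a) * (X : ℂ[X])) =
      ∏ i ∈ Finset.range N, (1 + C (ω ^ (i + 1)) * (X : ℂ[X])) := by
    intro N
    induction N with
    | zero => simp
    | succ N ih => rw [Finset.prod_Icc_succ_top (by omega), Finset.prod_range_succ, ih]
  rw [h1]
  induction e with
  | zero => simp
  | succ e ih =>
    rw [Nat.succ_mul, Finset.prod_range_add, ih, pow_succ, ← h0]
    congr 1
    refine Finset.prod_congr rfl fun i _ => ?_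
    rw [add_assoc, pow_add ω (e * D), mul_comm e D, pow_mul, hω.pow_eq_one, one_pow, one_mul]

noncomputable def gC (n k D : ℕ) : ℂ :=
  if D ∣ k then (-1) ^ (k + k / D) * ((n / D).choose (k / D) : ℂ) else 0

open Polynomial in
theorem esymm_root (ω : ℂ) (n k D : ℕ) (hD : 0 < D) (hDn : D ∣ n) (hω : IsPrimitiveRoot ω D) :
    ∑ A ∈ Finset.powersetCard k (Finset.Icc 1 n), ∏ a ∈ A, ω ^ a = gC n k D := by
  classical
  obtain ⟨e, rfl⟩ := hDn
  have h := congrArg (fun p : ℂ[X] => p.coeff k) (prod_full ω e D hD hω)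
  rw [mul_comm e D] at h
  have hL : (∏ a ∈ Finset.Icc 1 (D * e), (1 + C (ω ^ a) * (X : ℂ[X]))).coeff k =
      ∑ A ∈ Finset.powersetCard k (Finset.Icc 1 (D * e)), ∏ a ∈ A, ω ^ a := by
    rw [Finset.prod_one_add, finsetSum_coeff, Finset.powersetCard_eq_filter, Finset.sum_filter]
    refine Finset.sum_congr rfl fun A _ => ?_
    rw [Finset.prod_mul_distrib, Finset.prod_const, ← map_prod, coeff_C_mul_X_pow]
    simp only [eq_comm]
  have hR : ((1 - (-X : ℂ[X]) ^ D) ^ e).coeff k = gC (D * e) k D := by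
    have e1 : (1 - (-X : ℂ[X]) ^ D) = C (-(-1) ^ D) * X ^ D + 1 := by
      rw [neg_pow]; simp; ring
    rw [e1, add_pow, finsetSum_coeff, gC, Nat.mul_div_cancel_left _ hD]
    have e2 : ∀ j, ((C (-(-1) ^ D) * X ^ D : ℂ[X]) ^ j * 1 ^ (e - j) * ((e.choose j : ℕ) : ℂ[X])).coeff k
        = if k = D * j then (-(-1) ^ D) ^ j * (e.choose j : ℂ) else 0 := by
      intro j
      have : ((C (-(-1) ^ D) * X ^ D : ℂ[X]) ^ j * 1 ^ (e - j) * ((e.choose j : ℕ) : ℂ[X]))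
          = C ((-(-1) ^ D) ^ j * (e.choose j : ℂ)) * X ^ (D * j) := by
        rw [one_pow, mul_one, mul_pow, ← pow_mul, C_mul, C_pow, ← C_eq_natCast]
        ring
      rw [this, coeff_C_mul_X_pow]
    simp only [e2]
    split_ifs with hk
    · obtain ⟨q, rfl⟩ := hk
      rw [Nat.mul_div_cancel_left _ hD]
      have e3 : ∀ j, (D * q = D * j) ↔ q = j := fun j => Nat.mul_right_inj hD.ne'
      simp only [e3, Finset.sum_ite_eq, Finset.mem_range]
      have e4 : ((-(-1) ^ D) ^ q : ℂ) = (-1) ^ (D * q + q) := by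
        rw [neg_pow, ← pow_mul, pow_add]; ring
      split_ifs with hq
      · rw [e4]
      · rw [Nat.choose_eq_zero_of_lt (by omega)]; simp
    · refine Finset.sum_eq_zero fun j _ => ?_
      rw [if_neg]
      rintro rfl
      exact hk (Dvd.intro _ rfl)
  rw [← hL, ← hR]
  exact h

theorem orth (ζ : ℂ) (n s : ℕ) (hn : 0 < n) (hζ : IsPrimitiveRoot ζ n) :
    ∑ t ∈ Finset.range n, ζ ^ (t * s) = if n ∣ s then (n : ℂ) else 0 := by
  have h1 : ∀ t, ζ ^ (t * s) = (ζ ^ s) ^ t := fun t => by rw [← pow_mul, mul_comm]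
  simp only [h1]
  split_ifs with h
  · rw [(hζ.pow_eq_one_iff_dvd s).2 h]; simp
  · have hne : ζ ^ s ≠ 1 := fun h' => h ((hζ.pow_eq_one_iff_dvd s).1 h')
    rw [geom_sum_eq hne, ← pow_mul, mul_comm, pow_mul, hζ.pow_eq_one]
    simp

noncomputable def CD (ζ : ℂ) (n s D : ℕ) : ℂ :=
  ∑ t ∈ (Finset.range n).filter (fun t => n / n.gcd t = D), ζ ^ (t * s)

theorem CD_sum (ζ : ℂ) (n r j : ℕ) (hr : r < n) (hζ : IsPrimitiveRoot ζ n) (hj : j ∣ n) :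
    ∑ D ∈ j.divisors, CD ζ n (n - r) D = (fA r j : ℤ) := by
  classical
  have hn : 0 < n := by omega
  obtain ⟨e, he⟩ := hj
  have hj0 : 0 < j := Nat.pos_of_ne_zero (by rintro rfl; simp at he; omega)
  have he0 : 0 < e := Nat.pos_of_ne_zero (by rintro rfl; simp at he; omega)
  simp only [CD, Finset.sum_filter]
  rw [Finset.sum_comm]
  simp only [Finset.sum_ite_eq, Nat.mem_divisors]
  have h1 : ∀ t, (n / n.gcd t ∣ j ∧ j ≠ 0) ↔ e ∣ t := by
    intro t
    have hg : n.gcd t ∣ n := Nat.gcd_dvd_left _ _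
    rw [Nat.div_dvd_iff_dvd_mul hg (Nat.gcd_pos_of_pos_left _ hn)]
    rw [and_iff_left hj0.ne', mul_comm (n.gcd t) j]
    nth_rewrite 1 [he]
    rw [Nat.mul_dvd_mul_iff_left hj0, Nat.dvd_gcd_iff]
    exact and_iff_right ⟨j, by rw [he, mul_comm]⟩
  simp only [h1]
  have hω : IsPrimitiveRoot (ζ ^ e) j := hζ.pow hn (by rw [he, mul_comm])
  have h2 := orth (ζ ^ e) j (n - r) hj0 hω
  have h3 : (fA r j : ℤ) = if j ∣ n - r then (j : ℤ) else 0 := by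
    rw [fA_apply]
    have : j ∣ n - r ↔ j ∣ r := Nat.dvd_sub_iff_right hr.le ⟨e, he⟩
    simp only [this]
  rw [h3]
  push_cast
  rw [← h2, ← Finset.sum_filter]
  symm
  refine Finset.sum_nbij (fun u => e * u) ?_ ?_ ?_ ?_
  · intro u hu
    simp only [Finset.mem_range, Finset.mem_filter] at hu ⊢
    exact ⟨by rw [he, mul_comm j]; exact Nat.mul_lt_mul_of_pos_left hu he0, Dvd.intro _ rfl⟩
  · intro a _ b _ h
    exact Nat.eq_of_mul_eq_mul_left he0 h
  · intro t ht
    simp only [Finset.coe_filter, Finset.mem_range, Set.mem_ofPred_eq] at ht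
    obtain ⟨h4, u, rfl⟩ := ht
    refine ⟨u, ?_, rfl⟩
    rw [he, mul_comm j] at h4
    simpa using Nat.lt_of_mul_lt_mul_left h4
  · intro u _
    rw [← pow_mul, mul_assoc]

theorem CD_eq (ζ : ℂ) (n r : ℕ) (hr : r < n) (hζ : IsPrimitiveRoot ζ n) (D : ℕ) (hD : D ∣ n) :
    CD ζ n (n - r) D = (cA r D : ℤ) := by
  induction D using Nat.strong_induction_on with
  | _ D ih =>
    have hD0 : D ≠ 0 := by rintro rfl; simp at hD; omega
    have h1 := CD_sum ζ n r D hr hζ hD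
    rw [← cA_sum, ← Nat.insert_self_properDivisors hD0,
      Finset.sum_insert Nat.self_notMem_properDivisors,
      Finset.sum_insert Nat.self_notMem_properDivisors] at h1
    push_cast at h1
    rw [Finset.sum_congr rfl (fun E hE => ih E (Nat.mem_properDivisors.1 hE).2
      ((Nat.mem_properDivisors.1 hE).1.trans hD))] at h1
    exact add_right_cancel h1

theorem S_formula (n k r : ℕ) (hr : r < n) : (n : ℤ) * SbarCard n k r =
    ∑ D ∈ n.divisors, cA r D *
      (if D ∣ k then (-1) ^ (k + k / D) * ((n / D).choose (k / D) : ℤ) else 0) := by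
  classical
  have hn : 0 < n := by omega
  obtain ⟨ζ, hζ⟩ : ∃ ζ : ℂ, IsPrimitiveRoot ζ n := ⟨_, Complex.isPrimitiveRoot_exp n hn.ne'⟩
  have h1 : ((n : ℂ) * SbarCard n k r) = ∑ A ∈ Finset.powersetCard k (Finset.Icc 1 n),
      ∑ t ∈ Finset.range n, ζ ^ (t * ((∑ a ∈ A, a) + (n - r))) := by
    simp only [orth ζ n _ hn hζ]
    rw [SbarCard, ← Finset.filter_filter, ← Finset.powersetCard_eq_filter, Finset.card_filter]
    push_cast
    rw [Finset.mul_sum]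
    refine Finset.sum_congr rfl fun A _ => ?_
    have : (∑ a ∈ A, a) % n = r ↔ n ∣ (∑ a ∈ A, a) + (n - r) := by
      generalize (∑ a ∈ A, a) = s
      have e1 : s + (n - r) + r = s + n := by omega
      constructor
      · intro h
        have : s ≡ r [MOD n] := by rw [Nat.ModEq, h, Nat.mod_eq_of_lt hr]
        have h2 : s + (n - r) ≡ r + (n - r) [MOD n] := this.add_right _
        rw [show r + (n - r) = n by omega] at h2
        exact (Nat.modEq_zero_iff_dvd.1 (h2.trans (by simp [Nat.ModEq])))
      · intro h
        have h2 : s + (n - r) ≡ 0 [MOD n] := Nat.modEq_zero_iff_dvd.2 h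
        have h3 := h2.add_right r
        rw [e1, zero_add] at h3
        have h4 : s % n = r % n := by
          have := h3
          rw [Nat.ModEq, Nat.add_mod_right] at this
          exact this
        rw [h4, Nat.mod_eq_of_lt hr]
    simp only [this]
    split_ifs <;> simp
  rw [Finset.sum_comm] at h1
  have h2 : ∀ t ∈ Finset.range n, ∑ A ∈ Finset.powersetCard k (Finset.Icc 1 n),
      ζ ^ (t * ((∑ a ∈ A, a) + (n - r))) = ζ ^ (t * (n - r)) * gC n k (n / n.gcd t) := by
    intro t _
    have hg : n.gcd t ∣ n := Nat.gcd_dvd_left _ _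
    have hpos : 0 < n / n.gcd t := Nat.div_pos (Nat.le_of_dvd hn hg) (Nat.gcd_pos_of_pos_left _ hn)
    have hω : IsPrimitiveRoot (ζ ^ t) (n / n.gcd t) := by
      have := IsPrimitiveRoot.orderOf (ζ ^ t)
      have hfin : IsOfFinOrder ζ := isOfFinOrder_iff_pow_eq_one.2 ⟨n, hn, hζ.pow_eq_one⟩
      rwa [hfin.orderOf_pow, ← hζ.eq_orderOf] at this
    rw [← esymm_root (ζ ^ t) n k _ hpos (Nat.div_dvd_of_dvd hg) hω, Finset.mul_sum]
    refine Finset.sum_congr rfl fun A _ => ?_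
    rw [mul_add, pow_add, mul_comm, Finset.prod_pow_eq_pow_sum, ← pow_mul]
  rw [Finset.sum_congr rfl h2] at h1
  rw [← Finset.sum_fiberwise_of_maps_to (t := n.divisors) (g := fun t => n / n.gcd t)] at h1
  · have h3 : ∀ D ∈ n.divisors, ∑ t ∈ (Finset.range n).filter (fun t => n / n.gcd t = D),
        ζ ^ (t * (n - r)) * gC n k (n / n.gcd t) = ((cA r D : ℤ) : ℂ) * gC n k D := by
      intro D hD
      rw [← CD_eq ζ n r hr hζ D (Nat.mem_divisors.1 hD).1, CD, Finset.sum_mul]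
      refine Finset.sum_congr rfl fun t ht => ?_
      rw [(Finset.mem_filter.1 ht).2]
    rw [Finset.sum_congr rfl h3] at h1
    have h4 : (((n : ℤ) * SbarCard n k r : ℤ) : ℂ) = ((∑ D ∈ n.divisors, cA r D *
      (if D ∣ k then (-1) ^ (k + k / D) * ((n / D).choose (k / D) : ℤ) else 0) : ℤ) : ℂ) := by
      push_cast
      rw [h1]
      refine Finset.sum_congr rfl fun D _ => ?_
      rw [gC]
    exact_mod_cast h4
  · intro t _
    exact Nat.mem_divisors.2 ⟨Nat.div_dvd_of_dvd (Nat.gcd_dvd_left _ _), hn.ne'⟩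

/-- When `n, k` are even, `0 < k < n`, `ν₂(n) ≥ ν₂(k) = m` and `ν₂(k) - ν₂(r) ≤ 1`
(with `ν₂(0) = ∞`), the difference `|Nᵣ(n,k)| - |S̄ᵣ(n,k)|` equals
`± |Nᵣ(n/2^m, k/2^m)|`, the sign being `-1` exactly when `ν₂(r) = m - 1`. -/
theorem Nr_sub_Sbar (n k r : ℕ) (hr : r < n) (hk0 : 0 < k) (hkn : k < n)
    (hne : Even n) (hke : Even k)
    (hmn : padicValNat 2 k ≤ padicValNat 2 n)
    (hcond : r = 0 ∨ padicValNat 2 k ≤ padicValNat 2 r + 1) :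
    (NrCard n k r : ℤ) - SbarCard n k r =
      (if r ≠ 0 ∧ padicValNat 2 r = padicValNat 2 k - 1 then (-1 : ℤ) else 1) *
        NrCard (n / 2 ^ padicValNat 2 k) (k / 2 ^ padicValNat 2 k) r := by
  have h2 : n / 2 ^ padicValNat 2 k ≠ 0 := by
    have hd : 2 ^ padicValNat 2 k ∣ n := (pow_dvd_pow 2 hmn).trans pow_padicValNat_dvd
    have := Nat.div_pos (Nat.le_of_dvd (by omega) hd) (by positivity)
    omega
  exact final_step n k r hk0 hkn hke hmn hcond _ _ _ (Nr_formula n k r (by omega))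
    (S_formula n k r hr) (Nr_formula _ _ r h2)
end
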